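/- arXiv:1905.05418 — 2 statements merged into one kernel-verified Lean document; each statement's English description precedes it below -/
import Mathlib

section
/- Fix an integer δ > 2. Suppose G_1, …, G_{δ−1} are 2-connected finite simple graphs satisfying (♠)_δ, and let e_1, …, e_{δ−1} be edges of the corresponding graphs whose weights are all equal to δ−1. Then the gluing of G_1, …, G_{δ−1} along e_1, …, e_{δ−1}, i.e. the graph G obtained from the disjoint union of G_1, …, G_{δ−1} by identifying the edges e_1, …, e_{δ−1} (together with their endpoints) into a single distinguished edge e, satisfies (♠)_δ, and the weight of e in G equals 1. -/
/-!
The weight of the glued graph is `1` on the distinguished edge `ab` and is inherited from the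
pieces on all other edges.

*Connectivity.* In a `2`-connected graph, the contraction of a connected vertex set `S` is
`2`-connected exactly when the complement of `S` is connected (`contract_isTwoConnected_iff`);
hence a good flat is a set `S` with `G[S]` `2`-connected and `G - S` connected. A piece of the
gluing is attached to the rest only at `a` and `b`, which gives two principles: a connected set
containing `a` or `b` meets each piece in a connected set (`connected_inter`, retracting everything
outside the piece onto `a` or `b` and using the edge `ab`), and a connected set avoiding both lies
inside one piece (`subset_of_connected`). So if deleting or contracting an edge other than `ab`
leaves the gluing `2`-connected, the same holds in the piece of that edge, while contracting `ab`
creates a cut vertex because there are at least two pieces, each with a third vertex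
(`exists_third`). This makes the weight canonical.

*Good flats.* A good flat `S` containing `a` and `b` has its complement inside one piece, so it
contains all other pieces and meets that one in a good flat (`goodFlat_both`). Otherwise `S` is
contained in one piece and is a good flat there (`goodFlat_not_both`), so its equation is
inherited.

*Counting.* A full piece with `m` vertices besides `a`, `b` has weight `δ m + 1` besides `ab`, and a
good flat through `ab` of a piece, with `m` such vertices, has weight `δ m` besides `ab`. Summing
over the `δ - 1` pieces and adding the weight `1` of `ab` gives `δ (|V| - 1)` for the whole graph,
and one less than `δ (|S| - 1)` for a good flat `S` containing `a` and `b`, as exactly one piece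
is then not full.
-/

open SimpleGraph
open scoped Pointwise

namespace Gor

/-! ### Graph-theoretic notions -/

/-- A graph is `2`-connected if it is connected and remains connected after deletion of any
single vertex.  A single edge `K₂` counts as `2`-connected. -/
def IsTwoConnected {V : Type*} (G : SimpleGraph V) : Prop :=
  G.Connected ∧ ∀ v : V, (G.induce {u : V | u ≠ v}).Connected

/-- `E(S)`: the set of edges of `G` with both endpoints in `S`. -/
def edgesIn {V : Type*} (G : SimpleGraph V) (S : Set V) : Set (Sym2 V) :=
  {e ∈ G.edgeSet | ∀ v ∈ e, v ∈ S}

/-- The simple graph obtained from `G` by contracting all edges in `F`: its vertices are the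
connected components of the graph with edge set `F`, two being adjacent if some edge of `G`
joins them. -/
def contractEdges {V : Type*} (G : SimpleGraph V) (F : Set (Sym2 V)) :
    SimpleGraph (SimpleGraph.fromEdgeSet F).ConnectedComponent :=
  SimpleGraph.fromRel fun c d => ∃ u v : V, G.Adj u v ∧
    (SimpleGraph.fromEdgeSet F).connectedComponentMk u = c ∧
    (SimpleGraph.fromEdgeSet F).connectedComponentMk v = d

/-- `S` is a good flat of `G`: the induced subgraph `G[S]` is `2`-connected and the contraction
of all edges of `E(S)` in `G` is `2`-connected. -/
def IsGoodFlat {V : Type*} (G : SimpleGraph V) (S : Set V) : Prop :=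
  IsTwoConnected (G.induce S) ∧ IsTwoConnected (contractEdges G (edgesIn G S))

/-- The weight function `w : E → {1, δ-1}` with `w e = 1` whenever `G∖e` is `2`-connected and
`w e = δ - 1` whenever `G/e` is `2`-connected. -/
def IsCanonicalWeight {V : Type*} (G : SimpleGraph V) (δ : ℕ) (w : Sym2 V → ℕ) : Prop :=
  (∀ e ∈ G.edgeSet, w e = 1 ∨ w e = δ - 1) ∧
  (∀ e ∈ G.edgeSet, IsTwoConnected (G.deleteEdges {e}) → w e = 1) ∧
  (∀ e ∈ G.edgeSet, IsTwoConnected (contractEdges G {e}) → w e = δ - 1)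

/-- A `2`-connected graph `G` satisfies `(♠)_δ` via the weight function `w`. -/
def SatisfiesSpade {V : Type*} (G : SimpleGraph V) (δ : ℕ) (w : Sym2 V → ℕ) : Prop :=
  IsTwoConnected G ∧ IsCanonicalWeight G δ w ∧
  (∑ᶠ e ∈ G.edgeSet, w e) = δ * (Nat.card V - 1) ∧
  ∀ S : Set V, IsGoodFlat G S → (∑ᶠ e ∈ edgesIn G S, w e) + 1 = δ * (S.ncard - 1)

/-- The number of `2`-connected components (blocks) of a graph: the number of inclusion-maximal
vertex subsets inducing a `2`-connected subgraph. -/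
noncomputable def numBlocks {V : Type*} (G : SimpleGraph V) : ℕ :=
  {S : Set V | IsTwoConnected (G.induce S) ∧
    ∀ T : Set V, S ⊆ T → IsTwoConnected (G.induce T) → S = T}.ncard

/-! ### Lattice polytopes and the Gorenstein property -/

/-- A point of `ℝ^η` is a lattice point if all its coordinates are integers. -/
def IsLatticePoint {η : Type*} (x : η → ℝ) : Prop := ∀ i, ∃ z : ℤ, x i = z

/-- The cone over a polytope `P ⊆ ℝ^η`, living in `ℝ^η × ℝ`. -/
def coneOver {η : Type*} (P : Set (η → ℝ)) : Set ((η → ℝ) × ℝ) :=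
  {y | ∃ t : ℝ, ∃ p ∈ P, 0 ≤ t ∧ y = (t • p, t)}

/-- The lattice affinely spanned by the lattice points of `P`, placed at height one;
i.e. the subgroup of `ℝ^η × ℝ` generated by `{(p, 1) : p a lattice point of P}`. -/
def coneLattice {η : Type*} (P : Set (η → ℝ)) : Submodule ℤ ((η → ℝ) × ℝ) :=
  Submodule.span ℤ {y | ∃ p ∈ P, IsLatticePoint p ∧ y = (p, 1)}

/-- `h` is a linear form cutting out a facet-supporting hyperplane of the cone over `P`:
it is nonnegative on the cone and vanishes on a subset of the cone spanning one dimension less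
than the cone itself. -/
def IsFacetForm {η : Type*} (P : Set (η → ℝ)) (h : ((η → ℝ) × ℝ) →ₗ[ℝ] ℝ) : Prop :=
  (∀ y ∈ coneOver P, 0 ≤ h y) ∧
  Module.finrank ℝ (Submodule.span ℝ {y ∈ coneOver P | h y = 0}) + 1 =
    Module.finrank ℝ (Submodule.span ℝ (coneOver P))

/-- `h` is reduced with respect to the lattice spanned by `P`: it takes integer values on the
lattice and attains the value `1` there. -/
def IsReducedForm {η : Type*} (P : Set (η → ℝ)) (h : ((η → ℝ) × ℝ) →ₗ[ℝ] ℝ) : Prop :=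
  (∀ y ∈ coneLattice P, ∃ z : ℤ, h y = z) ∧ ∃ y ∈ coneLattice P, h y = 1

/-- A polytope `P`, regarded as full-dimensional in the affine lattice it spans, is
`δ`-Gorenstein if there is a lattice point `v ∈ δP` with `h (v, δ) = 1` for the reduced
equation `h` of every facet-supporting hyperplane of the cone over `P`. -/
def IsDeltaGorenstein {η : Type*} (P : Set (η → ℝ)) (δ : ℕ) : Prop :=
  ∃ v : η → ℝ, v ∈ (δ : ℝ) • P ∧ (v, (δ : ℝ)) ∈ coneLattice P ∧
    ∀ h : ((η → ℝ) × ℝ) →ₗ[ℝ] ℝ, IsFacetForm P h → IsReducedForm P h → h (v, (δ : ℝ)) = 1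

/-- A polytope is Gorenstein if it is `δ`-Gorenstein for some positive integer `δ`. -/
def IsGorenstein {η : Type*} (P : Set (η → ℝ)) : Prop :=
  ∃ δ : ℕ, 0 < δ ∧ IsDeltaGorenstein P δ

/-! ### Graphic matroids of simple graphs and their polytopes -/

/-- An independent set of the graphic matroid of `G`: a set of edges forming a forest. -/
def IsGraphicIndep {V : Type*} (G : SimpleGraph V) (I : Set (Sym2 V)) : Prop :=
  I ⊆ G.edgeSet ∧ (SimpleGraph.fromEdgeSet I).IsAcyclic

/-- A basis of the graphic matroid of `G`: a maximal forest (spanning forest). -/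
def IsGraphicBasis {V : Type*} (G : SimpleGraph V) (B : Set (Sym2 V)) : Prop :=
  IsGraphicIndep G B ∧ ∀ e ∈ G.edgeSet, e ∉ B → ¬ IsGraphicIndep G (insert e B)

/-- The base polytope `B(M(G))` of the graphic matroid of `G`: the convex hull of the
indicator vectors of the bases. -/
def basePolytope {V : Type*} (G : SimpleGraph V) : Set (Sym2 V → ℝ) :=
  convexHull ℝ {x | ∃ B : Set (Sym2 V), IsGraphicBasis G B ∧
    x = B.indicator fun _ => (1 : ℝ)}

/-- The base polytope `B(M(G))`, regarded inside `ℝ^E` where `E` is the edge set of `G`. -/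
def basePolytopeE {V : Type*} (G : SimpleGraph V) : Set (↥G.edgeSet → ℝ) :=
  convexHull ℝ {x | ∃ B : Set (Sym2 V), IsGraphicBasis G B ∧
    x = (Subtype.val ⁻¹' B).indicator fun _ => (1 : ℝ)}

/-- A homogeneous inequality `g x ≥ 0` is valid for `P` and defines a facet (a supporting
hyperplane whose intersection with `P` has affine dimension one less than `P`). -/
def IsSupportingFaceIneq {α : Type*} (P : Set (α → ℝ)) (g : (α → ℝ) → ℝ) : Prop :=
  (∀ x ∈ P, 0 ≤ g x) ∧
  Module.finrank ℝ (vectorSpan ℝ {x ∈ P | g x = 0}) + 1 =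
    Module.finrank ℝ (vectorSpan ℝ P)

/-! ### Multigraphs -/

/-- A finite undirected loopless multigraph on a vertex type `V` with edge type `E`. -/
structure Multigraph (V E : Type*) where
  ends : E → Sym2 V
  loopless : ∀ e, ¬ (ends e).IsDiag

/-- The underlying simple graph of a multigraph. -/
def Multigraph.toSimple {V E : Type*} (G : Multigraph V E) : SimpleGraph V :=
  SimpleGraph.fromEdgeSet (Set.range G.ends)

/-- `E(S)` for a multigraph: the set of edges with both endpoints in `S`. -/
def Multigraph.edgesIn {V E : Type*} (G : Multigraph V E) (S : Set V) : Set E :=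
  {e | ∀ v ∈ G.ends e, v ∈ S}

/-- A set of edges of a multigraph is a forest (an independent set of the graphic matroid):
no two parallel edges and no cycle. -/
def IsMultiForest {V E : Type*} (G : Multigraph V E) (I : Set E) : Prop :=
  Set.InjOn G.ends I ∧ (SimpleGraph.fromEdgeSet (G.ends '' I)).IsAcyclic

/-- The independence polytope `P(M(G))` of the graphic matroid of a multigraph `G`. -/
def multiIndepPolytope {V E : Type*} (G : Multigraph V E) : Set (E → ℝ) :=
  convexHull ℝ {x | ∃ I : Set E, IsMultiForest G I ∧ x = I.indicator fun _ => (1 : ℝ)}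

/-- The rank of a set of edges in the graphic matroid of a multigraph. -/
noncomputable def mrank {V E : Type*} (G : Multigraph V E) (A : Set E) : ℕ :=
  sSup {n | ∃ I ⊆ A, IsMultiForest G I ∧ I.ncard = n}

/-- A flat of the graphic matroid of a multigraph: adding any further edge increases the rank. -/
def IsGraphicFlat {V E : Type*} (G : Multigraph V E) (A : Set E) : Prop :=
  ∀ e : E, e ∉ A → mrank G (insert e A) ≠ mrank G A

/-- A circuit of the graphic matroid of a multigraph: a minimal dependent set of edges. -/
def IsMultiCircuit {V E : Type*} (G : Multigraph V E) (C : Set E) : Prop :=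
  ¬ IsMultiForest G C ∧ ∀ C' ⊂ C, IsMultiForest G C'

/-- The restriction of the graphic matroid of `G` to `A` is a connected matroid:
`A` is nonempty and any two distinct elements of `A` lie on a common circuit inside `A`. -/
def ConnectedRestriction {V E : Type*} (G : Multigraph V E) (A : Set E) : Prop :=
  A.Nonempty ∧ ∀ e ∈ A, ∀ f ∈ A, e ≠ f → ∃ C ⊆ A, IsMultiCircuit G C ∧ e ∈ C ∧ f ∈ C

/-- `G` is the `m`-blow-up of the simple graph `H`: every edge of `H` is replaced by exactly
`m` parallel edges and there are no other edges. -/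
def IsBlowUp {V E : Type*} (G : Multigraph V E) (m : ℕ) (H : SimpleGraph V) : Prop :=
  (∀ p ∈ H.edgeSet, {e : E | G.ends e = p}.ncard = m) ∧
  ∀ p : Sym2 V, p ∉ H.edgeSet → {e : E | G.ends e = p} = ∅

/-- The condition `(♣)_δ`: `(δ-1)|E(S)| + 1 = δ(|S|-1)` for every vertex subset `S` inducing a
`2`-connected subgraph. -/
def ClubCond {V : Type*} (H : SimpleGraph V) (δ : ℕ) : Prop :=
  ∀ S : Set V, IsTwoConnected (H.induce S) →
    (δ - 1) * (edgesIn H S).ncard + 1 = δ * (S.ncard - 1)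

/-! ### Chordality, `K₄` minors, cycle attachments -/

/-- A chordless cycle: a cycle such that every edge of `G` between vertices of the cycle is an
edge of the cycle. -/
def IsChordlessCycle {V : Type*} (G : SimpleGraph V) {v : V} (c : G.Walk v v) : Prop :=
  c.IsCycle ∧ ∀ e ∈ edgesIn G {u : V | u ∈ c.support}, e ∈ c.edges

/-- `G` is `δ`-chordal: every cycle without a chord has exactly `δ + 1` edges. -/
def IsDeltaChordal {V : Type*} (G : SimpleGraph V) (δ : ℕ) : Prop :=
  ∀ (v : V) (c : G.Walk v v), IsChordlessCycle G c → c.length = δ + 1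

/-- `G` has a `K₄` minor: there are four disjoint nonempty connected branch sets pairwise
joined by an edge. -/
def HasK4Minor {V : Type*} (G : SimpleGraph V) : Prop :=
  ∃ B : Fin 4 → Set V, (∀ i, (B i).Nonempty) ∧ (∀ i, (G.induce (B i)).Connected) ∧
    (Pairwise fun i j => Disjoint (B i) (B j)) ∧
    (Pairwise fun i j => ∃ u ∈ B i, ∃ v ∈ B j, G.Adj u v)

/-- One step of attaching a new `(δ+1)`-cycle to an edge: `B` is obtained from `A` by adding
`δ - 1` new vertices forming a path of length `δ` between the endpoints of an edge of
`H[A]`, these being all new edges. -/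
def AttachStep {V : Type*} (H : SimpleGraph V) (δ : ℕ) (A B : Set V) : Prop :=
  ∃ q : Fin (δ + 1) → V, Function.Injective q ∧
    H.Adj (q 0) (q (Fin.last δ)) ∧ q 0 ∈ A ∧ q (Fin.last δ) ∈ A ∧
    (∀ i : Fin (δ + 1), i ≠ 0 → i ≠ Fin.last δ → q i ∉ A) ∧
    B = A ∪ {x | ∃ i : Fin (δ + 1), i ≠ 0 ∧ i ≠ Fin.last δ ∧ q i = x} ∧
    edgesIn H B = edgesIn H A ∪ {e | ∃ i : Fin δ, e = s(q i.castSucc, q i.succ)}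

/-- `H` can be constructed from the clique `K₂` by repeatedly attaching new `(δ+1)`-cycles to
edges of the preceding graph. -/
def ConstructibleFromK2 {V : Type*} (H : SimpleGraph V) (δ : ℕ) : Prop :=
  ∃ (k : ℕ) (S : Fin (k + 1) → Set V),
    (∃ u v : V, H.Adj u v ∧ S 0 = {u, v}) ∧
    S (Fin.last k) = Set.univ ∧
    ∀ i : Fin k, AttachStep H δ (S i.castSucc) (S i.succ)

/-! ### Gluings, subdivisions, collisions, ears -/

/-- `G` (with distinguished edge `ab`) is the gluing of the graphs `Gs i` along the edges
`es i`: the disjoint union with all the edges `es i` identified to the single edge `ab`. -/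
def IsGluing {ι : Type*} {Vf : ι → Type*} {W : Type*} (Gs : ∀ i, SimpleGraph (Vf i))
    (es : ∀ i, Sym2 (Vf i)) (G : SimpleGraph W) (a b : W) : Prop :=
  a ≠ b ∧ G.Adj a b ∧
  ∃ φ : ∀ i, Vf i → W,
    (∀ i, Function.Injective (φ i)) ∧
    (∀ x : W, ∃ i, x ∈ Set.range (φ i)) ∧
    (∀ i, Sym2.map (φ i) (es i) = s(a, b)) ∧
    (∀ i j, i ≠ j → Set.range (φ i) ∩ Set.range (φ j) = {a, b}) ∧
    ∀ x y : W, G.Adj x y ↔ ∃ i, ∃ u v, (Gs i).Adj u v ∧ φ i u = x ∧ φ i v = y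

/-- `G'` together with the path `q` is the subdivision of `G` obtained by replacing the edge
`uv` by a path of `m` edges `q 0, …, q m` through new vertices. -/
def IsSubdivisionAt {V W : Type*} (G : SimpleGraph V) (u v : V) {m : ℕ}
    (G' : SimpleGraph W) (q : Fin (m + 1) → W) : Prop :=
  ∃ φ : V → W, Function.Injective φ ∧ Function.Injective q ∧
    q 0 = φ u ∧ q (Fin.last m) = φ v ∧
    (∀ i : Fin (m + 1), i ≠ 0 → i ≠ Fin.last m → q i ∉ Set.range φ) ∧
    (∀ x : W, x ∈ Set.range φ ∨ x ∈ Set.range q) ∧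
    ∀ x y : W, G'.Adj x y ↔
      ((∃ a b : V, G.Adj a b ∧ s(a, b) ≠ s(u, v) ∧ φ a = x ∧ φ b = y) ∨
       ∃ i : Fin m, s(x, y) = s(q i.castSucc, q i.succ))

/-- `G` (with the distinguished nonadjacent pair `a b`) is the collision of `G₁` and `G₂` on
the edges `e₁, e₂`: the disjoint union with `e₁` and `e₂` identified and then deleted. -/
def IsCollision {V₁ V₂ W : Type*} (G₁ : SimpleGraph V₁) (G₂ : SimpleGraph V₂)
    (e₁ : Sym2 V₁) (e₂ : Sym2 V₂) (G : SimpleGraph W) (a b : W) : Prop :=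
  a ≠ b ∧ ¬ G.Adj a b ∧
  ∃ (φ₁ : V₁ → W) (φ₂ : V₂ → W),
    Function.Injective φ₁ ∧ Function.Injective φ₂ ∧
    Sym2.map φ₁ e₁ = s(a, b) ∧ Sym2.map φ₂ e₂ = s(a, b) ∧
    (∀ x : W, x ∈ Set.range φ₁ ∨ x ∈ Set.range φ₂) ∧
    Set.range φ₁ ∩ Set.range φ₂ = {a, b} ∧
    ∀ x y : W, G.Adj x y ↔
      ((∃ u v, G₁.Adj u v ∧ s(u, v) ≠ e₁ ∧ φ₁ u = x ∧ φ₁ v = y) ∨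
       (∃ u v, G₂.Adj u v ∧ s(u, v) ≠ e₂ ∧ φ₂ u = x ∧ φ₂ v = y))

/-- The inner vertices of an ear. -/
def earInner {V : Type*} {s : ℕ} (p : Fin (s + 1) → V) : Set V :=
  {x | ∃ i : Fin (s + 1), i ≠ 0 ∧ i ≠ Fin.last s ∧ p i = x}

/-- The edges of an ear. -/
def earEdges {V : Type*} {s : ℕ} (p : Fin (s + 1) → V) : Set (Sym2 V) :=
  {e | ∃ i : Fin s, e = s(p i.castSucc, p i.succ)}

/-- An `s`-ear of `G`: a path with `s` edges whose inner vertices have degree `2` in `G`. -/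
def IsEar {V : Type*} (G : SimpleGraph V) {s : ℕ} (p : Fin (s + 1) → V) : Prop :=
  Function.Injective p ∧ (∀ i : Fin s, G.Adj (p i.castSucc) (p i.succ)) ∧
  ∀ i : Fin (s + 1), i ≠ 0 → i ≠ Fin.last s → (G.neighborSet (p i)).ncard = 2

/-- `T` is the vertex set of an inclusion-maximal proper `2`-connected induced subgraph. -/
def IsMaxProperTwoConnected {V : Type*} (G : SimpleGraph V) (T : Set V) : Prop :=
  IsTwoConnected (G.induce T) ∧ T ≠ Set.univ ∧
  ∀ T' : Set V, T ⊆ T' → T' ≠ Set.univ → IsTwoConnected (G.induce T') → T' = T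

/-! ### `(♠)₂` and `3`-connectivity -/

/-- A `2`-connected graph satisfies the equalities `(♠)₂`:
`|E| = 2(|V|-1)` and `|E(S)| = 2|S| - 3` for every good flat `S`. -/
def Spade2 {V : Type*} (G : SimpleGraph V) : Prop :=
  IsTwoConnected G ∧ G.edgeSet.ncard = 2 * (Nat.card V - 1) ∧
  ∀ S : Set V, IsGoodFlat G S → (edgesIn G S).ncard = 2 * S.ncard - 3

/-- A graph is `3`-connected if it has more than `3` vertices and remains connected after
deletion of any two vertices. -/
def IsThreeConnected {V : Type*} (G : SimpleGraph V) : Prop :=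
  3 < Nat.card V ∧ ∀ u v : V, (G.induce {x : V | x ≠ u ∧ x ≠ v}).Connected

/-! ### Inductive constructions -/

/-- Graphs obtainable from the `δ`-cycle by gluings (Proposition `construction1`) and
`(δ-1)`-subdivisions (Proposition `construction2`). -/
inductive Obtainable (δ : ℕ) : {W : Type} → SimpleGraph W → Prop
  | cycle {W : Type} (G : SimpleGraph W) (e : G ≃g SimpleGraph.cycleGraph δ) :
      Obtainable δ G
  | glue {Vf : Fin (δ - 1) → Type} {W : Type}
      (Gs : ∀ i, SimpleGraph (Vf i)) (ws : ∀ i, Sym2 (Vf i) → ℕ) (es : ∀ i, Sym2 (Vf i))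
      (G : SimpleGraph W) (a b : W)
      (hob : ∀ i, Obtainable δ (Gs i))
      (hsp : ∀ i, SatisfiesSpade (Gs i) δ (ws i))
      (hes : ∀ i, es i ∈ (Gs i).edgeSet)
      (hwe : ∀ i, ws i (es i) = δ - 1)
      (hgl : IsGluing Gs es G a b) : Obtainable δ G
  | subdivide {V W : Type} (G : SimpleGraph V) (w : Sym2 V → ℕ) (u v : V)
      (G' : SimpleGraph W) (q : Fin (δ - 1 + 1) → W)
      (hob : Obtainable δ G) (hsp : SatisfiesSpade G δ w)
      (huv : G.Adj u v) (hw1 : w s(u, v) = 1)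
      (hsub : IsSubdivisionAt G u v G' q) : Obtainable δ G'

/-- Graphs obtainable from the clique `K₄` by a finite sequence of collisions. -/
inductive ObtainableK4 : {W : Type} → SimpleGraph W → Prop
  | k4 {W : Type} (G : SimpleGraph W) (e : G ≃g (⊤ : SimpleGraph (Fin 4))) :
      ObtainableK4 G
  | collide {V₁ V₂ W : Type} (G₁ : SimpleGraph V₁) (G₂ : SimpleGraph V₂)
      (e₁ : Sym2 V₁) (e₂ : Sym2 V₂) (G : SimpleGraph W) (a b : W)
      (h₁ : ObtainableK4 G₁) (h₂ : ObtainableK4 G₂)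
      (he₁ : e₁ ∈ G₁.edgeSet) (he₂ : e₂ ∈ G₂.edgeSet)
      (hc : IsCollision G₁ G₂ e₁ e₂ G a b) : ObtainableK4 G

/-! ### Connectivity of induced subgraphs -/

/-- Connectedness passes along a surjective map that sends adjacent vertices to vertices
joined by a walk. -/
lemma connected_of_surj {V V' : Type*} {G : SimpleGraph V} {G' : SimpleGraph V'}
    (hG : G.Connected) (f : V → V') (hf : Function.Surjective f)
    (h : ∀ u v, G.Adj u v → G'.Reachable (f u) (f v)) : G'.Connected := by
  have key : ∀ u v, G.Reachable u v → G'.Reachable (f u) (f v) := by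
    rintro u v ⟨p⟩
    induction p with
    | nil => exact Reachable.refl _
    | cons hadj _ ih => exact (h _ _ hadj).trans ih
  have : Nonempty V' := hG.nonempty.map f
  refine Connected.mk fun x y => ?_
  obtain ⟨u, rfl⟩ := hf x
  obtain ⟨v, rfl⟩ := hf y
  exact key u v (hG.preconnected u v)

lemma induce_image_connected {V W : Type*} {K : SimpleGraph V} {H : SimpleGraph W}
    (ψ : K ↪g H) (T : Set V) :
    (H.induce (ψ '' T)).Connected ↔ (K.induce T).Connected := by
  let e : K.induce T ≃g H.induce (ψ '' T) :=
    { toEquiv := Equiv.Set.image ψ T ψ.injective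
      map_rel_iff' := by
        intro x y
        simp [Equiv.Set.image_apply] }
  exact e.connected_iff.symm

lemma induce_univ_connected {V : Type*} {K : SimpleGraph V} :
    (K.induce Set.univ).Connected ↔ K.Connected :=
  (induceUnivIso K).connected_iff

/-- `2`-connectedness of a graph embedded in `H`, read off from vertex sets of `H`. -/
lemma isTwoConnected_iff {V W : Type*} {K : SimpleGraph V} {H : SimpleGraph W} (ψ : K ↪g H) :
    IsTwoConnected K ↔ (H.induce (Set.range ψ)).Connected ∧
      ∀ v ∈ Set.range ψ, (H.induce (Set.range ψ \ {v})).Connected := by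
  unfold IsTwoConnected
  rw [← Set.image_univ, induce_image_connected, induce_univ_connected]
  refine and_congr_right fun _ => ?_
  have him : ∀ v, ψ '' Set.univ \ {ψ v} = ψ '' {u | u ≠ v} := by
    intro v
    ext x
    constructor
    · rintro ⟨⟨u, -, rfl⟩, hu⟩
      exact ⟨u, fun h => hu (by simp [h]), rfl⟩
    · rintro ⟨u, hu, rfl⟩
      exact ⟨⟨u, trivial, rfl⟩, fun h => hu (ψ.injective h)⟩
  constructor
  · rintro h _ ⟨v, -, rfl⟩
    rw [him, induce_image_connected]
    exact h v
  · intro h v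
    rw [← induce_image_connected ψ, ← him]
    exact h _ ⟨v, trivial, rfl⟩

lemma isTwoConnected_induce_iff {V W : Type*} {K : SimpleGraph V} {H : SimpleGraph W}
    (ψ : K ↪g H) (T : Set V) :
    IsTwoConnected (K.induce T) ↔ (H.induce (ψ '' T)).Connected ∧
      ∀ v ∈ ψ '' T, (H.induce (ψ '' T \ {v})).Connected := by
  have h := isTwoConnected_iff ((Embedding.induce T).trans ψ : K.induce T ↪g H)
  have hr : Set.range ((Embedding.induce T).trans ψ : K.induce T ↪g H) = ψ '' T := by
    ext x
    simp [Embedding.induce]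
  rwa [hr] at h

/-! ### Contractions -/

/-- The components of the graph with edge set `E(S)` are `S`, if `S` induces a connected
subgraph, and the single vertices outside `S`. -/
lemma mk_eq_iff {V : Type*} {G : SimpleGraph V} {S : Set V} (hS : (G.induce S).Connected)
    (u v : V) :
    (fromEdgeSet (edgesIn G S)).connectedComponentMk u =
      (fromEdgeSet (edgesIn G S)).connectedComponentMk v ↔ u = v ∨ (u ∈ S ∧ v ∈ S) := by
  rw [ConnectedComponent.eq]
  constructor
  · rintro ⟨p⟩
    induction p with
    | nil => exact Or.inl rfl
    | cons hadj _ ih =>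
      rw [fromEdgeSet_adj] at hadj
      have h := hadj.1.2
      simp only [Sym2.mem_iff, forall_eq_or_imp, forall_eq] at h
      rcases ih with rfl | ih
      · exact Or.inr h
      · exact Or.inr ⟨h.1, ih.2⟩
  · rintro (rfl | ⟨hu, hv⟩)
    · exact Reachable.refl _
    · let f : G.induce S →g fromEdgeSet (edgesIn G S) :=
        { toFun := Subtype.val
          map_rel' := by
            rintro ⟨x, hx⟩ ⟨y, hy⟩ hxy
            have hxy : G.Adj x y := hxy
            rw [fromEdgeSet_adj]
            refine ⟨⟨hxy, ?_⟩, hxy.ne⟩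
            simp only [Sym2.mem_iff, forall_eq_or_imp, forall_eq]
            exact ⟨hx, hy⟩ }
      exact (hS.preconnected ⟨u, hu⟩ ⟨v, hv⟩).map f

lemma contractEdges_adj_or {V : Type*} {G : SimpleGraph V} {F : Set (Sym2 V)} {u v : V}
    (h : G.Adj u v) :
    (fromEdgeSet F).connectedComponentMk u = (fromEdgeSet F).connectedComponentMk v ∨
    (contractEdges G F).Adj ((fromEdgeSet F).connectedComponentMk u)
      ((fromEdgeSet F).connectedComponentMk v) := by
  by_cases he : (fromEdgeSet F).connectedComponentMk u = (fromEdgeSet F).connectedComponentMk v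
  · exact Or.inl he
  · right
    unfold contractEdges
    rw [fromRel_adj]
    exact ⟨he, Or.inl ⟨u, v, h, rfl, rfl⟩⟩

/-- In a `2`-connected graph, contracting a connected vertex set `S` can only create a cut
vertex at the image of `S`, so the contraction is `2`-connected exactly when the complement
of `S` is connected (in particular nonempty). -/
lemma contract_isTwoConnected_iff {V : Type*} {G : SimpleGraph V} (hG : IsTwoConnected G)
    {S : Set V} (hS : (G.induce S).Connected) :
    IsTwoConnected (contractEdges G (edgesIn G S)) ↔ (G.induce Sᶜ).Connected := by
  obtain ⟨s, hs⟩ := hS.nonempty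
  have hmk := mk_eq_iff hS
  set K := fromEdgeSet (edgesIn G S) with hK
  constructor
  · intro h
    have h1 := h.2 (K.connectedComponentMk s)
    have hout : ∀ d : K.ConnectedComponent, K.connectedComponentMk (Quot.out d) = d :=
      fun d => Quot.out_eq d
    have huniq : ∀ d : K.ConnectedComponent, d ≠ K.connectedComponentMk s → ∀ u,
        K.connectedComponentMk u = d → u ∉ S ∧ u = Quot.out d := by
      intro d hd u hu
      have huS : u ∉ S := fun huS => hd (by rw [← hu, hmk]; exact Or.inr ⟨huS, hs⟩)
      refine ⟨huS, ?_⟩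
      rcases (hmk u (Quot.out d)).1 (by rw [hu, hout]) with h | h
      · exact h
      · exact absurd h.1 huS
    refine connected_of_surj h1
      (fun d => ⟨Quot.out d.1, (huniq d.1 d.2 _ (hout d.1)).1⟩) ?_ ?_
    · rintro ⟨u, hu⟩
      have hne : K.connectedComponentMk u ≠ K.connectedComponentMk s := by
        intro h
        rcases (hmk u s).1 h with h | h
        · exact hu (h ▸ hs)
        · exact hu h.1
      exact ⟨⟨K.connectedComponentMk u, hne⟩, Subtype.ext (huniq _ hne u rfl).2.symm⟩
    · rintro ⟨d, hd⟩ ⟨d', hd'⟩ hadj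
      have hadj : (contractEdges G (edgesIn G S)).Adj d d' := hadj
      unfold contractEdges at hadj
      rw [fromRel_adj] at hadj
      apply Adj.reachable
      change G.Adj (Quot.out d) (Quot.out d')
      rcases hadj.2 with ⟨u, v, huv, hu, hv⟩ | ⟨u, v, huv, hu, hv⟩
      · rw [← (huniq d hd u hu).2, ← (huniq d' hd' v hv).2]
        exact huv
      · rw [← (huniq d' hd' u hu).2, ← (huniq d hd v hv).2]
        exact huv.symm
  · intro hc
    constructor
    · refine connected_of_surj hG.1 K.connectedComponentMk Quot.mk_surjective ?_
      intro u v huv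
      rcases contractEdges_adj_or (F := edgesIn G S) huv with h | h
      · rw [← hK] at h
        rw [h]
      · exact h.reachable
    · intro d
      obtain ⟨x, rfl⟩ : ∃ x, K.connectedComponentMk x = d := Quot.mk_surjective d
      have hB : (G.induce {u | K.connectedComponentMk u ≠ K.connectedComponentMk x}).Connected := by
        by_cases hx : x ∈ S
        · have : {u | K.connectedComponentMk u ≠ K.connectedComponentMk x} = Sᶜ := by
            ext u
            simp only [Set.mem_ofPred_eq, Set.mem_compl_iff, ne_eq, hmk]
            grind
          rw [this]
          exact hc
        · have : {u | K.connectedComponentMk u ≠ K.connectedComponentMk x} = {u | u ≠ x} := by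
            ext u
            simp only [Set.mem_ofPred_eq, ne_eq, hmk]
            grind
          rw [this]
          exact hG.2 x
      refine connected_of_surj hB (fun u => ⟨K.connectedComponentMk u.1, u.2⟩) ?_ ?_
      · rintro ⟨d, hd⟩
        obtain ⟨y, rfl⟩ : ∃ y, K.connectedComponentMk y = d := Quot.mk_surjective d
        exact ⟨⟨y, hd⟩, rfl⟩
      · rintro ⟨u, hu⟩ ⟨v, hv⟩ huv
        rcases contractEdges_adj_or (F := edgesIn G S) (show G.Adj u v from huv) with h | h
        · rw [← hK] at h
          simp only [h]
          exact Reachable.refl _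
        · exact Adj.reachable (G := (contractEdges G (edgesIn G S)).induce _) h

lemma contract_edge_isTwoConnected_iff {V : Type*} {G : SimpleGraph V} (hG : IsTwoConnected G)
    {u v : V} (h : G.Adj u v) :
    IsTwoConnected (contractEdges G {s(u, v)}) ↔ (G.induce ({u, v} : Set V)ᶜ).Connected := by
  have hE : edgesIn G {u, v} = {s(u, v)} := by
    ext e
    induction e with | _ x y
    simp only [edgesIn, Set.mem_ofPred_eq, mem_edgeSet, Sym2.mem_iff, forall_eq_or_imp, forall_eq,
      Set.mem_insert_iff, Set.mem_singleton_iff, Sym2.eq_iff]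
    constructor
    · rintro ⟨hxy, rfl | rfl, rfl | rfl⟩ <;> simp_all
    · rintro (⟨rfl, rfl⟩ | ⟨rfl, rfl⟩)
      · simp [h]
      · simp [h.symm]
  rw [← hE]
  exact contract_isTwoConnected_iff hG (induce_pair_connected_of_adj h)

/-! ### Cutting at a pair of adjacent vertices -/

/-- If `R` is attached to its complement only at the adjacent vertices `a`, `b ∈ R`, then a
connected set `A` containing `a` or `b` meets `R` in a connected set: the part of `A` outside `R`
is retracted onto `a` or `b`. -/
lemma connected_inter {W : Type*} {H : SimpleGraph W} {a b : W} {R A : Set W}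
    (hab : H.Adj a b) (ha : a ∈ R) (hb : b ∈ R)
    (hR : ∀ x ∈ R, ∀ y ∉ R, H.Adj x y → x = a ∨ x = b)
    (hA : (H.induce A).Connected) (hm : a ∈ A ∨ b ∈ A) :
    (H.induce (A ∩ R)).Connected := by
  classical
  obtain ⟨c, hcA, hc⟩ : ∃ c, c ∈ A ∧ (c = a ∨ c = b) := by
    rcases hm with h | h
    · exact ⟨a, h, Or.inl rfl⟩
    · exact ⟨b, h, Or.inr rfl⟩
  have hcR : c ∈ R := by rcases hc with rfl | rfl <;> assumption
  -- every attachment vertex in `A` is equal or adjacent to the target `c` of the retraction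
  have hcr : ∀ x (hx : x ∈ A ∩ R), (x = a ∨ x = b) →
      (H.induce (A ∩ R)).Reachable ⟨x, hx⟩ ⟨c, hcA, hcR⟩ := by
    intro x hx hxab
    by_cases hxc : x = c
    · subst hxc
      exact Reachable.refl _
    · have : H.Adj x c := by
        have := hab.symm
        rcases hxab with rfl | rfl <;> rcases hc with rfl | rfl <;> first | assumption | simp_all
      exact Adj.reachable (G := H.induce (A ∩ R)) this
  refine connected_of_surj hA
    (fun x => if hx : x.1 ∈ R then ⟨x.1, x.2, hx⟩ else ⟨c, hcA, hcR⟩) ?_ ?_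
  · rintro ⟨x, hxA, hxR⟩
    exact ⟨⟨x, hxA⟩, by simp [hxR]⟩
  · rintro ⟨x, hx⟩ ⟨y, hy⟩ hxy
    have hxy : H.Adj x y := hxy
    by_cases hxR : x ∈ R <;> by_cases hyR : y ∈ R <;> simp only [hxR, hyR, dite_true, dite_false]
    · exact Adj.reachable (G := H.induce (A ∩ R)) hxy
    · exact hcr x _ (hR x hxR y hyR hxy)
    · exact (hcr y _ (hR y hyR x hxR hxy.symm)).symm
    · exact Reachable.refl _

/-- A connected set avoiding the attachment vertices `a`, `b` of `R` lies inside `R` as soon as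
it meets `R`. -/
lemma subset_of_connected {W : Type*} {H : SimpleGraph W} {a b : W} {R A : Set W}
    (hR : ∀ x ∈ R, ∀ y ∉ R, H.Adj x y → x = a ∨ x = b)
    (hA : (H.induce A).Connected) (ha : a ∉ A) (hb : b ∉ A) {x : W} (hxA : x ∈ A) (hxR : x ∈ R) :
    A ⊆ R := by
  have key : ∀ u v : A, (H.induce A).Reachable u v → u.1 ∈ R → v.1 ∈ R := by
    rintro u v ⟨p⟩
    induction p with
    | nil => exact id
    | @cons u v w hadj _ ih =>
      intro hu
      apply ih
      by_contra hv
      rcases hR _ hu _ hv hadj with h | h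
      · exact ha (h ▸ u.2)
      · exact hb (h ▸ u.2)
  intro y hy
  exact key ⟨x, hxA⟩ ⟨y, hy⟩ (hA.preconnected _ _) hxR

lemma isTwoConnected_induce_self {V : Type*} {G : SimpleGraph V} (S : Set V) :
    IsTwoConnected (G.induce S) ↔ (G.induce S).Connected ∧
      ∀ v ∈ S, (G.induce (S \ {v})).Connected := by
  have h := isTwoConnected_induce_iff (Embedding.refl : G ↪g G) S
  have hr : (Embedding.refl : G ↪g G) '' S = S := by
    ext x
    simp
  rwa [hr] at h

lemma isGoodFlat_iff {V : Type*} {G : SimpleGraph V} (hG : IsTwoConnected G) (S : Set V) :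
    IsGoodFlat G S ↔ IsTwoConnected (G.induce S) ∧ (G.induce Sᶜ).Connected :=
  and_congr_right fun h => contract_isTwoConnected_iff hG h.1

/-! ### The pieces of a gluing -/

/-- The maps `φ i` exhibit `G`, with distinguished edge `ab`, as the gluing of the graphs `Gs i`
along their edges `es i`. -/
structure GluingMaps {ι : Type*} {Vf : ι → Type*} {W : Type*} (Gs : ∀ i, SimpleGraph (Vf i))
    (es : ∀ i, Sym2 (Vf i)) (G : SimpleGraph W) (a b : W) (φ : ∀ i, Vf i → W) : Prop where
  adj : G.Adj a b
  mem : ∀ i, es i ∈ (Gs i).edgeSet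
  inj : ∀ i, Function.Injective (φ i)
  cover : ∀ x : W, ∃ i, x ∈ Set.range (φ i)
  edge : ∀ i, Sym2.map (φ i) (es i) = s(a, b)
  inter : ∀ i j, i ≠ j → Set.range (φ i) ∩ Set.range (φ j) = {a, b}
  adj_iff : ∀ x y : W, G.Adj x y ↔ ∃ i, ∃ u v, (Gs i).Adj u v ∧ φ i u = x ∧ φ i v = y

namespace GluingMaps

variable {ι : Type*} {Vf : ι → Type*} {W : Type*} {Gs : ∀ i, SimpleGraph (Vf i)}
  {es : ∀ i, Sym2 (Vf i)} {G : SimpleGraph W} {a b : W} {φ : ∀ i, Vf i → W}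

lemma mem_range (h : GluingMaps Gs es G a b φ) (i : ι) :
    a ∈ Set.range (φ i) ∧ b ∈ Set.range (φ i) := by
  have h1 : ∀ x, x ∈ s(a, b) → x ∈ Set.range (φ i) := by
    intro x hx
    rw [← h.edge i, Sym2.mem_map] at hx
    obtain ⟨u, -, hu⟩ := hx
    exact ⟨u, hu⟩
  exact ⟨h1 a (by simp), h1 b (by simp)⟩

lemma eq_or (h : GluingMaps Gs es G a b φ) {i j : ι} (hij : i ≠ j) {x : W}
    (hi : x ∈ Set.range (φ i)) (hj : x ∈ Set.range (φ j)) : x = a ∨ x = b := by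
  have : x ∈ ({a, b} : Set W) := h.inter i j hij ▸ ⟨hi, hj⟩
  simpa using this

/-- Two different pieces share only the distinguished edge. -/
lemma map_eq (h : GluingMaps Gs es G a b φ) {i j : ι} (hij : i ≠ j) {e : Sym2 (Vf i)}
    {f : Sym2 (Vf j)} (he : e ∈ (Gs i).edgeSet) (hef : Sym2.map (φ i) e = Sym2.map (φ j) f) :
    Sym2.map (φ i) e = s(a, b) := by
  have hx : ∀ x, x ∈ Sym2.map (φ i) e → x = a ∨ x = b := by
    intro x hx
    obtain ⟨u, -, hu⟩ := Sym2.mem_map.1 hx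
    rw [hef] at hx
    obtain ⟨v, -, hv⟩ := Sym2.mem_map.1 hx
    exact h.eq_or hij ⟨u, hu⟩ ⟨v, hv⟩
  induction e with | _ u v
  have huv : φ i u ≠ φ i v := fun hh => (mem_edgeSet _ |>.1 he).ne (h.inj i hh)
  rw [Sym2.map_mk] at hx ⊢
  have h1 := hx (φ i u) (by simp)
  have h2 := hx (φ i v) (by simp)
  rw [Sym2.eq_iff]
  grind

lemma map_eq_iff (h : GluingMaps Gs es G a b φ) {i : ι} {e : Sym2 (Vf i)} :
    Sym2.map (φ i) e = s(a, b) ↔ e = es i := by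
  rw [← h.edge i]
  exact (Sym2.map.injective (h.inj i)).eq_iff

lemma map_adj_iff (h : GluingMaps Gs es G a b φ) {i : ι} {u v : Vf i} :
    G.Adj (φ i u) (φ i v) ↔ (Gs i).Adj u v := by
  refine ⟨fun hadj => ?_, fun hadj => (h.adj_iff _ _).2 ⟨i, u, v, hadj, rfl, rfl⟩⟩
  obtain ⟨j, u', v', hadj', hu, hv⟩ := (h.adj_iff _ _).1 hadj
  by_cases hij : j = i
  · subst hij
    rwa [← h.inj _ hu, ← h.inj _ hv]
  · have h1 := h.map_eq hij (e := s(u', v')) (f := s(u, v)) hadj' (by simp [hu, hv])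
    have h2 : Sym2.map (φ i) s(u, v) = s(a, b) := by
      rw [← h1]
      simp [hu, hv]
    have h3 := h.mem i
    rwa [← h.map_eq_iff.1 h2] at h3

/-- Each piece embeds as an induced subgraph. -/
def emb (h : GluingMaps Gs es G a b φ) (i : ι) : Gs i ↪g G where
  toFun := φ i
  inj' := h.inj i
  map_rel_iff' := h.map_adj_iff

/-- A piece with an edge deleted embeds into the gluing with that edge deleted. -/
def embDelete (h : GluingMaps Gs es G a b φ) (i : ι) (e : Sym2 (Vf i)) :
    (Gs i).deleteEdges {e} ↪g G.deleteEdges {Sym2.map (φ i) e} where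
  toFun := φ i
  inj' := h.inj i
  map_rel_iff' := by
    intro u v
    simp only [Function.Embedding.coeFn_mk, deleteEdges_adj, Set.mem_singleton_iff,
      h.map_adj_iff, ← Sym2.map_mk, (Sym2.map.injective (h.inj i)).eq_iff]

lemma boundary (h : GluingMaps Gs es G a b φ) (i : ι) :
    ∀ x ∈ Set.range (φ i), ∀ y ∉ Set.range (φ i), G.Adj x y → x = a ∨ x = b := by
  intro x hx y hy hxy
  obtain ⟨j, u, v, -, rfl, rfl⟩ := (h.adj_iff _ _).1 hxy
  refine h.eq_or (i := i) (j := j) ?_ hx ⟨u, rfl⟩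
  rintro rfl
  exact hy ⟨v, rfl⟩

lemma inter_range_connected (h : GluingMaps Gs es G a b φ) (i : ι) {A : Set W}
    (hA : (G.induce A).Connected) (hm : a ∈ A ∨ b ∈ A) :
    (G.induce (A ∩ Set.range (φ i))).Connected :=
  connected_inter h.adj (h.mem_range i).1 (h.mem_range i).2 (h.boundary i) hA hm

/-- A set meeting every piece in a connected set, all of them sharing a vertex, is connected. -/
lemma connected_of_pieces (h : GluingMaps Gs es G a b φ) {A : Set W} {c : W} (hcA : c ∈ A)
    (hc : c = a ∨ c = b) (hA : ∀ i, (G.induce (A ∩ Set.range (φ i))).Connected) :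
    (G.induce A).Connected := by
  have key : ∀ x : A, (G.induce A).Reachable x ⟨c, hcA⟩ := by
    rintro ⟨x, hx⟩
    obtain ⟨i, hi⟩ := h.cover x
    have hci : c ∈ Set.range (φ i) := by
      rcases hc with rfl | rfl
      · exact (h.mem_range i).1
      · exact (h.mem_range i).2
    have := (hA i).preconnected ⟨x, hx, hi⟩ ⟨c, hcA, hci⟩
    exact this.map (induceHomOfLE G Set.inter_subset_left).toHom
  have : Nonempty A := ⟨⟨c, hcA⟩⟩
  exact Connected.mk fun x y => (key x).trans (key y).symm

lemma isTwoConnected (h : GluingMaps Gs es G a b φ) (h2 : ∀ i, IsTwoConnected (Gs i)) :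
    IsTwoConnected G := by
  have hp := fun i => (isTwoConnected_iff (h.emb i)).1 (h2 i)
  have hpiece : ∀ i, (G.induce (Set.range (φ i))).Connected := fun i => (hp i).1
  constructor
  · rw [← induce_univ_connected]
    refine h.connected_of_pieces (c := a) trivial (Or.inl rfl) fun i => ?_
    rw [Set.univ_inter]
    exact hpiece i
  · intro v
    obtain ⟨c, hcv, hc⟩ : ∃ c, c ≠ v ∧ (c = a ∨ c = b) := by
      by_cases hv : a = v
      · exact ⟨b, fun hb => h.adj.ne (hv.trans hb.symm), Or.inr rfl⟩
      · exact ⟨a, hv, Or.inl rfl⟩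
    refine h.connected_of_pieces (c := c) hcv hc fun i => ?_
    by_cases hv : v ∈ Set.range (φ i)
    · have : {u | u ≠ v} ∩ Set.range (φ i) = Set.range (φ i) \ {v} := by
        ext
        simp [and_comm]
      rw [this]
      exact (hp i).2 v hv
    · have : {u | u ≠ v} ∩ Set.range (φ i) = Set.range (φ i) := by
        refine Set.inter_eq_right.2 fun u hu huv => hv (huv ▸ hu)
      rw [this]
      exact hpiece i

/-- Deleting an edge other than `ab` cannot destroy `2`-connectedness of its piece without
destroying that of the gluing. -/
lemma delete_piece (h : GluingMaps Gs es G a b φ) {i : ι} {e : Sym2 (Vf i)} (he : e ≠ es i)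
    (h2 : IsTwoConnected (G.deleteEdges {Sym2.map (φ i) e})) :
    IsTwoConnected ((Gs i).deleteEdges {e}) := by
  set H := G.deleteEdges {Sym2.map (φ i) e} with hH
  have hab : H.Adj a b := by
    rw [hH, deleteEdges_adj]
    exact ⟨h.adj, fun hh => he (h.map_eq_iff.1 (Set.mem_singleton_iff.1 hh).symm)⟩
  have hR : ∀ x ∈ Set.range (φ i), ∀ y ∉ Set.range (φ i), H.Adj x y → x = a ∨ x = b :=
    fun x hx y hy hxy => h.boundary i x hx y hy (deleteEdges_le _ hxy)
  have hm := h.mem_range i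
  refine (isTwoConnected_iff (h.embDelete i e)).2 ⟨?_, fun v _ => ?_⟩
  · have := connected_inter hab hm.1 hm.2 hR (induce_univ_connected.2 h2.1) (Or.inl trivial)
    rwa [Set.univ_inter] at this
  · have hv : a ∈ {u | u ≠ v} ∨ b ∈ {u | u ≠ v} := by
      by_cases hv : a = v
      · exact Or.inr fun hb => h.adj.ne (hv.trans hb.symm)
      · exact Or.inl hv
    have := connected_inter hab hm.1 hm.2 hR (h2.2 v) hv
    have hs : {u | u ≠ v} ∩ Set.range (φ i) = Set.range (φ i) \ {v} := by
      ext
      simp [and_comm]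
    rw [hs] at this
    exact this

lemma image_preimage (φ' : ∀ i, Vf i → W) (i : ι) (S : Set W) :
    φ' i '' (φ' i ⁻¹' S) = S ∩ Set.range (φ' i) := Set.image_preimage_eq_inter_range

lemma compl_piece (h : GluingMaps Gs es G a b φ) (i : ι) (S : Set W)
    (hS : (G.induce (Sᶜ ∩ Set.range (φ i))).Connected) :
    ((Gs i).induce (φ i ⁻¹' S)ᶜ).Connected := by
  rw [← Set.preimage_compl, ← induce_image_connected (h.emb i)]
  change (G.induce (φ i '' _)).Connected
  rwa [image_preimage]

/-- If contracting an edge other than `ab` leaves the gluing `2`-connected, then it leaves the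
piece of that edge `2`-connected. -/
lemma contract_piece (h : GluingMaps Gs es G a b φ) (hc : ∀ i, IsTwoConnected (Gs i)) {i : ι}
    {e : Sym2 (Vf i)} (hmem : e ∈ (Gs i).edgeSet) (he : e ≠ es i)
    (h2 : IsTwoConnected (contractEdges G {Sym2.map (φ i) e})) :
    IsTwoConnected (contractEdges (Gs i) {e}) := by
  induction e with | _ u v
  have hadj : (Gs i).Adj u v := hmem
  rw [Sym2.map_mk, contract_edge_isTwoConnected_iff (h.isTwoConnected hc)
    (h.map_adj_iff.2 hadj)] at h2
  rw [contract_edge_isTwoConnected_iff (hc i) hadj]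
  have hpre : φ i ⁻¹' {φ i u, φ i v} = {u, v} := by
    ext x
    simp [(h.inj i).eq_iff]
  rw [← hpre]
  refine h.compl_piece i _ (h.inter_range_connected i h2 ?_)
  by_contra! hh
  simp only [Set.mem_compl_iff, not_not, Set.mem_insert_iff, Set.mem_singleton_iff] at hh
  have hne := h.adj.ne
  refine he (h.map_eq_iff.1 ?_)
  rw [Sym2.map_mk, Sym2.eq_iff]
  grind

/-- Contracting `ab` creates a cut vertex, since at least two pieces have a further vertex. -/
lemma not_contract (h : GluingMaps Gs es G a b φ) (hc : ∀ i, IsTwoConnected (Gs i)) {i j : ι}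
    (hij : i ≠ j) (h3 : ∀ i, ∃ x ∈ Set.range (φ i), x ≠ a ∧ x ≠ b) :
    ¬ IsTwoConnected (contractEdges G {s(a, b)}) := by
  rw [contract_edge_isTwoConnected_iff (h.isTwoConnected hc) h.adj]
  intro hcon
  obtain ⟨x, hxi, hxa, hxb⟩ := h3 i
  obtain ⟨y, hyj, hya, hyb⟩ := h3 j
  have := subset_of_connected (h.boundary i) hcon (by simp) (by simp) (x := x) (by simp [*]) hxi
  rcases h.eq_or hij (this (show y ∈ _ by simp [*])) hyj with rfl | rfl <;> contradiction

/-! ### Good flats of a gluing -/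

lemma goodFlat_piece (h : GluingMaps Gs es G a b φ) (hc : ∀ i, IsTwoConnected (Gs i)) {i : ι}
    {S : Set W} (h1 : IsTwoConnected (G.induce (S ∩ Set.range (φ i))))
    (h2 : (G.induce (Sᶜ ∩ Set.range (φ i))).Connected) : IsGoodFlat (Gs i) (φ i ⁻¹' S) := by
  rw [isGoodFlat_iff (hc i)]
  refine ⟨?_, h.compl_piece i S h2⟩
  rw [isTwoConnected_induce_iff (h.emb i)]
  change (G.induce (φ i '' _)).Connected ∧ ∀ v ∈ φ i '' _, (G.induce ((φ i '' _) \ {v})).Connected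
  rw [image_preimage]
  exact (isTwoConnected_induce_self _).1 h1

/-- A good flat containing `a` and `b` contains all pieces but one, and meets that one in a good
flat. -/
lemma goodFlat_both (h : GluingMaps Gs es G a b φ) (hc : ∀ i, IsTwoConnected (Gs i))
    {S : Set W} (hS : IsGoodFlat G S) (ha : a ∈ S) (hb : b ∈ S) :
    ∃ i, IsGoodFlat (Gs i) (φ i ⁻¹' S) ∧ ∀ j, j ≠ i → Set.range (φ j) ⊆ S := by
  rw [isGoodFlat_iff (h.isTwoConnected hc)] at hS
  obtain ⟨hS1, hS2⟩ := hS
  rw [isTwoConnected_induce_self] at hS1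
  obtain ⟨x, hx⟩ := hS2.nonempty
  obtain ⟨i, hi⟩ := h.cover x
  have hsub : Sᶜ ⊆ Set.range (φ i) :=
    subset_of_connected (h.boundary i) hS2 (by simpa) (by simpa) hx hi
  refine ⟨i, h.goodFlat_piece hc ?_ ?_, ?_⟩
  · rw [isTwoConnected_induce_self]
    refine ⟨h.inter_range_connected i hS1.1 (Or.inl ha), fun v hv => ?_⟩
    rw [Set.inter_sdiff_right_comm]
    refine h.inter_range_connected i (hS1.2 v hv.1) ?_
    by_cases hv : a = v
    · exact Or.inr ⟨hb, fun hb => h.adj.ne (hv.trans (Set.mem_singleton_iff.1 hb).symm)⟩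
    · exact Or.inl ⟨ha, hv⟩
  · rwa [Set.inter_eq_left.2 hsub]
  · intro j hj y hy
    by_contra hyS
    rcases h.eq_or hj hy (hsub hyS) with rfl | rfl <;> contradiction

/-- A good flat not containing both `a` and `b` is a good flat of a single piece. -/
lemma goodFlat_not_both (h : GluingMaps Gs es G a b φ) (hc : ∀ i, IsTwoConnected (Gs i))
    {S : Set W} (hS : IsGoodFlat G S) (hab : ¬ (a ∈ S ∧ b ∈ S)) :
    ∃ i, IsGoodFlat (Gs i) (φ i ⁻¹' S) ∧ S ⊆ Set.range (φ i) := by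
  rw [isGoodFlat_iff (h.isTwoConnected hc)] at hS
  obtain ⟨hS1, hS2⟩ := hS
  have hS1' := (isTwoConnected_induce_self S).1 hS1
  obtain ⟨A, hA, haA, hbA, hSA⟩ : ∃ A : Set W, (G.induce A).Connected ∧ a ∉ A ∧ b ∉ A ∧
      S ⊆ A ∪ {a, b} := by
    by_cases ha : a ∈ S
    · refine ⟨S \ {a}, hS1'.2 a ha, by simp, fun hb => hab ⟨ha, hb.1⟩, ?_⟩
      intro x hx
      by_cases hxa : x = a <;> simp [hx, hxa]
    · by_cases hb : b ∈ S
      · refine ⟨S \ {b}, hS1'.2 b hb, fun hh => ha hh.1, by simp, ?_⟩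
        intro x hx
        by_cases hxb : x = b <;> simp [hx, hxb]
      · exact ⟨S, hS1'.1, ha, hb, Set.subset_union_left⟩
  obtain ⟨x, hx⟩ := hA.nonempty
  obtain ⟨i, hi⟩ := h.cover x
  have hAR := subset_of_connected (h.boundary i) hA haA hbA hx hi
  have hSR : S ⊆ Set.range (φ i) := by
    refine hSA.trans (Set.union_subset hAR ?_)
    rintro y (rfl | rfl)
    · exact (h.mem_range i).1
    · exact (h.mem_range i).2
  refine ⟨i, h.goodFlat_piece hc ?_ ?_, hSR⟩
  · rwa [Set.inter_eq_left.2 hSR]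
  · refine h.inter_range_connected i hS2 ?_
    by_contra! hh
    simp only [Set.mem_compl_iff, not_not] at hh
    exact hab hh

/-! ### The weight of a gluing -/

open Classical in
/-- The weight on the glued graph: `1` on the distinguished edge, inherited from the pieces on
the other edges; the value on non-edges, also `1`, is irrelevant. -/
noncomputable def weight (Gs : ∀ i, SimpleGraph (Vf i)) (φ : ∀ i, Vf i → W)
    (ws : ∀ i, Sym2 (Vf i) → ℕ) (a b : W) (e : Sym2 W) : ℕ :=
  if h : e ≠ s(a, b) ∧ ∃ p : Σ i, Sym2 (Vf i), p.2 ∈ (Gs p.1).edgeSet ∧ Sym2.map (φ p.1) p.2 = e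
  then ws h.2.choose.1 h.2.choose.2 else 1

lemma weight_ab (ws : ∀ i, Sym2 (Vf i) → ℕ) : weight Gs φ ws a b s(a, b) = 1 := by
  simp [weight]

lemma weight_map (h : GluingMaps Gs es G a b φ) (ws : ∀ i, Sym2 (Vf i) → ℕ) {i : ι}
    {e : Sym2 (Vf i)} (he : e ∈ (Gs i).edgeSet) (hne : e ≠ es i) :
    weight Gs φ ws a b (Sym2.map (φ i) e) = ws i e := by
  have hne' : Sym2.map (φ i) e ≠ s(a, b) := fun hh => hne (h.map_eq_iff.1 hh)
  have hex : Sym2.map (φ i) e ≠ s(a, b) ∧ ∃ p : Σ i, Sym2 (Vf i), p.2 ∈ (Gs p.1).edgeSet ∧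
      Sym2.map (φ p.1) p.2 = Sym2.map (φ i) e := ⟨hne', ⟨i, e⟩, he, rfl⟩
  rw [weight, dif_pos hex]
  obtain ⟨hp1, hp2⟩ := hex.2.choose_spec
  generalize hex.2.choose = p at hp1 hp2
  obtain ⟨j, f⟩ := p
  by_cases hij : i = j
  · subst hij
    rw [Sym2.map.injective (h.inj i) hp2]
  · exact absurd (h.map_eq hij he hp2.symm) hne'

lemma exists_piece (h : GluingMaps Gs es G a b φ) {e : Sym2 W} (he : e ∈ G.edgeSet) :
    ∃ i, ∃ f ∈ (Gs i).edgeSet, Sym2.map (φ i) f = e := by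
  induction e with | _ x y
  obtain ⟨i, u, v, huv, rfl, rfl⟩ := (h.adj_iff _ _).1 he
  exact ⟨i, s(u, v), huv, rfl⟩

lemma map_mem (h : GluingMaps Gs es G a b φ) {i : ι} {e : Sym2 (Vf i)} :
    Sym2.map (φ i) e ∈ G.edgeSet ↔ e ∈ (Gs i).edgeSet := by
  induction e with | _ x y
  exact h.map_adj_iff

lemma map_mem_edgesIn (h : GluingMaps Gs es G a b φ) {i : ι} {S : Set W} {e : Sym2 (Vf i)} :
    Sym2.map (φ i) e ∈ edgesIn G S ↔ e ∈ edgesIn (Gs i) (φ i ⁻¹' S) := by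
  simp only [edgesIn, Set.mem_ofPred_eq, h.map_mem, Sym2.mem_map, forall_exists_index, and_imp,
    forall_apply_eq_imp_iff₂, Set.mem_preimage]

lemma isCanonicalWeight (h : GluingMaps Gs es G a b φ) (hc : ∀ i, IsTwoConnected (Gs i)) {δ : ℕ}
    {ws : ∀ i, Sym2 (Vf i) → ℕ} (hw : ∀ i, IsCanonicalWeight (Gs i) δ (ws i)) {i j : ι}
    (hij : i ≠ j) (h3 : ∀ i, ∃ x ∈ Set.range (φ i), x ≠ a ∧ x ≠ b) :
    IsCanonicalWeight G δ (weight Gs φ ws a b) := by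
  have key : ∀ e ∈ G.edgeSet, e ≠ s(a, b) → ∃ i, ∃ f ∈ (Gs i).edgeSet, f ≠ es i ∧
      Sym2.map (φ i) f = e := by
    intro e he hne
    obtain ⟨i, f, hf, rfl⟩ := h.exists_piece he
    exact ⟨i, f, hf, fun hh => hne (h.map_eq_iff.2 hh), rfl⟩
  refine ⟨fun e he => ?_, fun e he h2 => ?_, fun e he h2 => ?_⟩
  · by_cases hab : e = s(a, b)
    · exact Or.inl (hab ▸ weight_ab ws)
    · obtain ⟨i, f, hf, hne, rfl⟩ := key e he hab
      rw [h.weight_map ws hf hne]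
      exact (hw i).1 f hf
  · by_cases hab : e = s(a, b)
    · exact hab ▸ weight_ab ws
    · obtain ⟨i, f, hf, hne, rfl⟩ := key e he hab
      rw [h.weight_map ws hf hne]
      exact (hw i).2.1 f hf (h.delete_piece hne h2)
  · by_cases hab : e = s(a, b)
    · exact absurd (hab ▸ h2) (h.not_contract hc hij h3)
    · obtain ⟨i, f, hf, hne, rfl⟩ := key e he hab
      rw [h.weight_map ws hf hne]
      exact (hw i).2.2 f hf (h.contract_piece hc hf hne h2)

/-! ### Counting edges and vertices -/

lemma edgesIn_diff (h : GluingMaps Gs es G a b φ) (S : Set W) :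
    edgesIn G S \ {s(a, b)} =
      ⋃ i, Sym2.map (φ i) '' (edgesIn (Gs i) (φ i ⁻¹' S) \ {es i}) := by
  ext e
  simp only [Set.mem_sdiff, Set.mem_singleton_iff, Set.mem_iUnion, Set.mem_image]
  constructor
  · rintro ⟨he, hne⟩
    obtain ⟨i, f, hf, rfl⟩ := h.exists_piece he.1
    exact ⟨i, f, ⟨h.map_mem_edgesIn.1 he, fun hh => hne (h.map_eq_iff.2 hh)⟩, rfl⟩
  · rintro ⟨i, f, ⟨hf, hne⟩, rfl⟩
    exact ⟨h.map_mem_edgesIn.2 hf, fun hh => hne (h.map_eq_iff.1 hh)⟩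

lemma sum_diff [Finite ι] [Finite W] (h : GluingMaps Gs es G a b φ)
    (ws : ∀ i, Sym2 (Vf i) → ℕ) (S : Set W) :
    ∑ᶠ e ∈ edgesIn G S \ {s(a, b)}, weight Gs φ ws a b e =
      ∑ᶠ i, ∑ᶠ e ∈ edgesIn (Gs i) (φ i ⁻¹' S) \ {es i}, ws i e := by
  rw [h.edgesIn_diff, finsum_mem_iUnion]
  · refine finsum_congr fun i => ?_
    rw [finsum_mem_image (Sym2.map.injective (h.inj i)).injOn]
    exact finsum_mem_congr rfl fun e he => h.weight_map ws he.1.1 he.2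
  · intro i j hij
    rw [Function.onFun, Set.disjoint_left]
    rintro _ ⟨e, he, rfl⟩ ⟨f, hf, hef⟩
    exact he.2 (h.map_eq_iff.1 (h.map_eq hij he.1.1 hef.symm))
  · exact fun i => Set.toFinite _

lemma finsum_mem_eq_add_diff {α : Type*} [Finite α] (f : α → ℕ) {s : Set α} {x : α} (hx : x ∈ s) :
    ∑ᶠ e ∈ s, f e = f x + ∑ᶠ e ∈ s \ {x}, f e := by
  rw [← finsum_mem_insert f (fun h => h.2 rfl) (Set.toFinite _), Set.insert_sdiff_singleton,
    Set.insert_eq_of_mem hx]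

lemma ncard_eq [Finite ι] [Finite W] (h : GluingMaps Gs es G a b φ) {S : Set W} (ha : a ∈ S)
    (hb : b ∈ S) :
    S.ncard = 2 + ∑ᶠ i, ((S ∩ Set.range (φ i)) \ {a, b}).ncard := by
  have h1 : S \ {a, b} = ⋃ i, (S ∩ Set.range (φ i)) \ {a, b} := by
    ext x
    have := h.cover x
    simp only [Set.mem_sdiff, Set.mem_iUnion, Set.mem_inter_iff]
    grind
  have h2 : (S \ {a, b}).ncard = ∑ᶠ i, ((S ∩ Set.range (φ i)) \ {a, b}).ncard := by
    rw [h1, Set.ncard_iUnion_of_finite fun i => Set.toFinite _]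
    intro i j hij
    rw [Function.onFun, Set.disjoint_left]
    rintro x ⟨⟨-, hi⟩, hx⟩ ⟨⟨-, hj⟩, -⟩
    exact hx (by simpa using h.eq_or hij hi hj)
  rw [← h2, ← Set.ncard_pair h.adj.ne, add_comm]
  exact (Set.ncard_sdiff_add_ncard_of_subset (Set.pair_subset ha hb) (Set.toFinite _)).symm

lemma ncard_preimage [Finite W] (h : GluingMaps Gs es G a b φ) {S : Set W}
    (i : ι) : (φ i ⁻¹' S).ncard = (S ∩ Set.range (φ i)).ncard := by
  rw [← image_preimage, Set.ncard_image_of_injective _ (h.inj i)]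

lemma ncard_preimage_eq [Finite W] (h : GluingMaps Gs es G a b φ) {S : Set W} (ha : a ∈ S)
    (hb : b ∈ S) (i : ι) :
    (φ i ⁻¹' S).ncard = 2 + ((S ∩ Set.range (φ i)) \ {a, b}).ncard := by
  rw [h.ncard_preimage, ← Set.ncard_pair h.adj.ne, add_comm]
  have hsub : {a, b} ⊆ S ∩ Set.range (φ i) :=
    Set.pair_subset ⟨ha, (h.mem_range i).1⟩ ⟨hb, (h.mem_range i).2⟩
  exact (Set.ncard_sdiff_add_ncard_of_subset hsub (Set.toFinite _)).symm

lemma es_mem_edgesIn (h : GluingMaps Gs es G a b φ) {S : Set W} (ha : a ∈ S) (hb : b ∈ S)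
    (i : ι) : es i ∈ edgesIn (Gs i) (φ i ⁻¹' S) := by
  rw [← h.map_mem_edgesIn, h.edge i]
  refine ⟨h.adj, ?_⟩
  simp [ha, hb]

lemma edgesIn_univ {V : Type*} (K : SimpleGraph V) : edgesIn K Set.univ = K.edgeSet := by
  ext
  simp [edgesIn]

end GluingMaps

/-! ### The gluing theorem -/

/-- Every piece has a vertex besides `a` and `b`, because `K₂` with an edge of weight `δ - 1`
violates the equation for the total weight. -/
lemma exists_third {δ : ℕ} (hδ : 2 < δ) {ι : Type*} {Vf : ι → Type*} {W : Type*} [Finite W]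
    {Gs : ∀ i, SimpleGraph (Vf i)} {es : ∀ i, Sym2 (Vf i)} {G : SimpleGraph W} {a b : W}
    {φ : ∀ i, Vf i → W} (h : GluingMaps Gs es G a b φ) {ws : ∀ i, Sym2 (Vf i) → ℕ} (i : ι)
    (hsum : ∑ᶠ e ∈ (Gs i).edgeSet, ws i e = δ * (Nat.card (Vf i) - 1))
    (hwe : ws i (es i) = δ - 1) : ∃ x ∈ Set.range (φ i), x ≠ a ∧ x ≠ b := by
  by_contra! hno
  have : Finite (Vf i) := Finite.of_injective _ (h.inj i)
  have hcard := h.ncard_preimage_eq (S := Set.univ) trivial trivial i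
  have hempty : (Set.univ ∩ Set.range (φ i)) \ {a, b} = ∅ := by
    ext x
    simp only [Set.mem_sdiff, Set.mem_inter_iff, Set.mem_univ, true_and, Set.mem_insert_iff,
      Set.mem_singleton_iff, Set.mem_empty_iff_false, iff_false, not_and, not_not]
    intro hx
    by_cases hxa : x = a
    · exact Or.inl hxa
    · exact Or.inr (hno x hx hxa)
  rw [hempty, Set.ncard_empty, Set.preimage_univ, Set.ncard_univ] at hcard
  have hE : (Gs i).edgeSet = {es i} := by
    ext e
    constructor
    · intro he
      induction e with | _ u v
      have hne : φ i u ≠ φ i v := fun hh => (mem_edgeSet _ |>.1 he).ne (h.inj i hh)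
      have h1 := hno (φ i u) ⟨u, rfl⟩
      have h2 := hno (φ i v) ⟨v, rfl⟩
      refine h.map_eq_iff.1 ?_
      rw [Sym2.map_mk, Sym2.eq_iff]
      grind
    · rintro rfl
      exact h.mem i
  rw [hE, finsum_mem_singleton, hwe, hcard] at hsum
  simp at hsum
  omega

theorem stmt6 {δ : ℕ} (hδ : 2 < δ) {Vf : Fin (δ - 1) → Type} {W : Type}
    [∀ i, Fintype (Vf i)] [∀ i, DecidableEq (Vf i)] [Fintype W] [DecidableEq W]
    (Gs : ∀ i, SimpleGraph (Vf i)) (ws : ∀ i, Sym2 (Vf i) → ℕ) (es : ∀ i, Sym2 (Vf i))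
    (hsp : ∀ i, SatisfiesSpade (Gs i) δ (ws i))
    (hes : ∀ i, es i ∈ (Gs i).edgeSet)
    (hwe : ∀ i, ws i (es i) = δ - 1)
    (G : SimpleGraph W) (a b : W) (hgl : IsGluing Gs es G a b) :
    ∃ w : Sym2 W → ℕ, SatisfiesSpade G δ w ∧ w s(a, b) = 1 := by
  obtain ⟨-, hadj, φ, hinj, hcov, hedge, hinter, hiff⟩ := hgl
  have h : GluingMaps Gs es G a b φ := ⟨hadj, hes, hinj, hcov, hedge, hinter, hiff⟩
  have hc := fun i => (hsp i).1
  have h3 : ∀ i, ∃ x ∈ Set.range (φ i), x ≠ a ∧ x ≠ b :=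
    fun i => exists_third hδ h i (hsp i).2.2.1 (hwe i)
  -- total weight of `E(S)` when `a, b ∈ S`, in terms of the pieces
  have hsumG : ∀ S : Set W, a ∈ S → b ∈ S →
      ∑ᶠ e ∈ edgesIn G S, GluingMaps.weight Gs φ ws a b e =
        1 + ∑ i, ∑ᶠ e ∈ edgesIn (Gs i) (φ i ⁻¹' S) \ {es i}, ws i e := by
    intro S ha hb
    have hmem : s(a, b) ∈ edgesIn G S := ⟨hadj, by simp [ha, hb]⟩
    rw [GluingMaps.finsum_mem_eq_add_diff _ hmem, h.sum_diff, GluingMaps.weight_ab,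
      finsum_eq_sum_of_fintype]
  have hsumP : ∀ S : Set W, a ∈ S → b ∈ S → ∀ i,
      ∑ᶠ e ∈ edgesIn (Gs i) (φ i ⁻¹' S), ws i e =
        (δ - 1) + ∑ᶠ e ∈ edgesIn (Gs i) (φ i ⁻¹' S) \ {es i}, ws i e := by
    intro S ha hb i
    rw [GluingMaps.finsum_mem_eq_add_diff _ (h.es_mem_edgesIn ha hb i), hwe]
  -- a piece contained in `S` has `m` vertices besides `a`, `b` and weight `δ m + 1` besides `ab`
  have hfull : ∀ S : Set W, a ∈ S → b ∈ S → ∀ i, Set.range (φ i) ⊆ S →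
      ∑ᶠ e ∈ edgesIn (Gs i) (φ i ⁻¹' S) \ {es i}, ws i e =
        δ * ((S ∩ Set.range (φ i)) \ {a, b}).ncard + 1 := by
    intro S ha hb i hi
    have hpre : φ i ⁻¹' S = Set.univ := Set.preimage_eq_univ_iff.2 hi
    have h1 := hsumP S ha hb i
    have h2 := h.ncard_preimage_eq ha hb i
    have h4 := (hsp i).2.2.1
    rw [hpre, Set.ncard_univ] at h2
    rw [hpre, GluingMaps.edgesIn_univ, h4, h2] at h1
    rw [hpre, GluingMaps.edgesIn_univ]
    generalize ((S ∩ Set.range (φ i)) \ {a, b}).ncard = n at h1 ⊢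
    rw [show 2 + n - 1 = n + 1 by omega, mul_add, mul_one] at h1
    omega
  refine ⟨GluingMaps.weight Gs φ ws a b, ⟨h.isTwoConnected hc, ?_, ?_, fun S hS => ?_⟩,
    GluingMaps.weight_ab ws⟩
  · exact h.isCanonicalWeight hc (fun i => (hsp i).2.1) (i := ⟨0, by omega⟩) (j := ⟨1, by omega⟩)
      (by simp) h3
  · rw [← GluingMaps.edgesIn_univ, hsumG Set.univ trivial trivial,
      Finset.sum_congr rfl fun i _ => hfull Set.univ trivial trivial i (Set.subset_univ _),
      ← Set.ncard_univ, h.ncard_eq (S := Set.univ) trivial trivial, finsum_eq_sum_of_fintype,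
      Finset.sum_add_distrib, ← Finset.mul_sum]
    generalize ∑ i, ((Set.univ ∩ Set.range (φ i)) \ {a, b}).ncard = n
    rw [show 2 + n - 1 = n + 1 by omega, mul_add, mul_one]
    simp
    omega
  · by_cases hab : a ∈ S ∧ b ∈ S
    · obtain ⟨ha, hb⟩ := hab
      obtain ⟨i, hgood, hrest⟩ := h.goodFlat_both hc hS ha hb
      have hi := (hsp i).2.2.2 _ hgood
      rw [hsumP S ha hb i, h.ncard_preimage_eq ha hb i] at hi
      have hj : ∀ j, ∑ᶠ e ∈ edgesIn (Gs j) (φ j ⁻¹' S) \ {es j}, ws j e + (if j = i then 1 else 0) =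
          δ * ((S ∩ Set.range (φ j)) \ {a, b}).ncard + 1 := by
        intro j
        by_cases hji : j = i
        · subst hji
          rw [if_pos rfl]
          generalize ((S ∩ Set.range (φ j)) \ {a, b}).ncard = n at hi ⊢
          rw [show 2 + n - 1 = n + 1 by omega, mul_add, mul_one] at hi
          omega
        · rw [if_neg hji, hfull S ha hb j (hrest j hji)]
      have hsum := Finset.sum_congr (rfl : (Finset.univ : Finset (Fin (δ - 1))) = _)
        fun j _ => hj j
      rw [Finset.sum_add_distrib, Finset.sum_add_distrib, ← Finset.mul_sum] at hsum
      simp only [Finset.sum_ite_eq', Finset.mem_univ, if_true, Finset.sum_const, Finset.card_univ,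
        Fintype.card_fin, smul_eq_mul, mul_one] at hsum
      rw [hsumG S ha hb, h.ncard_eq ha hb, finsum_eq_sum_of_fintype]
      generalize ∑ j, ((S ∩ Set.range (φ j)) \ {a, b}).ncard = n at hsum ⊢
      rw [show 2 + n - 1 = n + 1 by omega, mul_add, mul_one]
      omega
    · obtain ⟨i, hgood, hsub⟩ := h.goodFlat_not_both hc hS hab
      have hi := (hsp i).2.2.2 _ hgood
      rw [h.ncard_preimage, Set.inter_eq_left.2 hsub] at hi
      -- `S` lies in one piece and does not span `ab`, so `E(S)` has the same weight in the piece
      have hne : ∀ f ∈ edgesIn (Gs i) (φ i ⁻¹' S), f ≠ es i := by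
        rintro _ hf rfl
        rw [← h.map_mem_edgesIn, h.edge i] at hf
        exact hab ⟨hf.2 a (by simp), hf.2 b (by simp)⟩
      have hE : edgesIn G S = Sym2.map (φ i) '' edgesIn (Gs i) (φ i ⁻¹' S) := by
        ext e
        constructor
        · intro he
          induction e with | _ x y
          obtain ⟨u, rfl⟩ := hsub (he.2 x (by simp))
          obtain ⟨v, rfl⟩ := hsub (he.2 y (by simp))
          exact ⟨s(u, v), h.map_mem_edgesIn.1 he, rfl⟩
        · rintro ⟨f, hf, rfl⟩
          exact h.map_mem_edgesIn.2 hf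
      rw [hE, finsum_mem_image (Sym2.map.injective (h.inj i)).injOn, ← hi]
      congr 1
      exact finsum_mem_congr rfl fun e he => h.weight_map ws he.1 (hne e he)

end Gor
end

section
/- Fix an integer δ > 2. Suppose G is a 2-connected finite simple graph satisfying (♠)_δ, and let e be an edge of G with weight equal to 1. Then the (δ−1)-subdivision of e, i.e. the graph G' obtained from G by replacing e with a path of δ−1 edges e_1, …, e_{δ−1} through δ−2 new vertices, satisfies (♠)_δ, and the weight of each e_i in G' equals δ−1. -/
/-!
Write `φ` for the inclusion of the old vertices and `Q 0, …, Q m` (`m = δ - 1`) for the new path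
of `G'`, so that `Q 0 = φ u` and `Q m = φ v`.  Old edges keep their weight and path edges get
weight `δ - 1`.  Replacing an edge of weight `1` by `δ - 1` edges of weight `δ - 1` adds
`(δ - 1)² - 1 = δ (δ - 2)` to the weight, which is `δ` times the number of new vertices; this gives
the total weight, and also the flat equality for every good flat of `G'` containing the whole path.

*Connectivity.*  Collapsing the interior of the path onto `u`, or onto `v`, maps `G'` onto `G`, and
connectivity descends along this map.  To show that `G` stays connected after deleting a vertex `b`
one collapses onto an end of the path different from `b` (`Sub.transfer`).  The same argument works
after deleting or contracting old edges (`Sub.isTwoConnected_of`, `Sub.contract_of`), which gives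
the two implications defining the weight.  Deleting a path edge leaves a vertex of degree one, so
no condition arises there.  In the other direction `G'` is `2`-connected as soon as `G` has a third
vertex (`Sub.isTwoConnected`); `K₂` is ruled out because its edge would need weight `δ`.

*Good flats.*  Let `S'` be a good flat of `G'`.  If it meets the interior of the path, it is a
single path edge or contains the whole path (`Sub.path_subset_or`), and in the latter case its old
vertices form a good flat of `G`.  If it contains no interior vertex and not both ends, it is a
good flat of `G`.  If it contains no interior vertex but both ends, the contracted vertex would
separate the interior of the path from the other old vertices, so `S'` is the set of all old
vertices (`Sub.old_all`), and the equality follows from the total weight of `G`.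

All connectivity statements are expressed by the predicate `Cl G S X`: the graph `G`, with `S`
identified to a point and `X` deleted, is connected.
-/

open SimpleGraph
open scoped Pointwise

namespace Gor

section Subdivision

variable {V W : Type*}

/-! ### Connectivity by closed vertex sets -/

/-- `Cl G S X`: after identifying all vertices of `S` and deleting the vertices of `X`, the graph
`G` is connected (in particular nonempty).  Connectivity is expressed by the absence of nontrivial
vertex sets `P` that respect the identification and are closed under adjacency outside `X`. -/
def Cl (G : SimpleGraph V) (S X : Set V) : Prop :=
  (∃ a, a ∉ X) ∧ ∀ P : Set V, (∀ x y, x ∈ S → y ∈ S → x ∈ P → y ∈ P) →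
    (∃ a, a ∉ X ∧ a ∈ P) →
    (∀ x y, x ∉ X → y ∉ X → G.Adj x y → x ∈ P → y ∈ P) → ∀ y, y ∉ X → y ∈ P

/-- The class of `b` when the vertices of `S` are identified. -/
def cls (S : Set V) (b : V) : Set V := {x | x = b ∨ (x ∈ S ∧ b ∈ S)}

lemma connected_iff (G : SimpleGraph V) :
    G.Connected ↔ Nonempty V ∧ ∀ P : Set V, (∃ a, a ∈ P) →
      (∀ x y, G.Adj x y → x ∈ P → y ∈ P) → ∀ y, y ∈ P := by
  constructor
  · intro h
    refine ⟨h.nonempty, ?_⟩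
    rintro P ⟨a, ha⟩ hP y
    obtain ⟨p⟩ := h.preconnected a y
    induction p with
    | nil => exact ha
    | cons hadj p ih => exact ih (hP _ _ hadj ha)
  · rintro ⟨hne, h⟩
    refine { preconnected := fun a b => ?_, nonempty := hne }
    exact h {y | G.Reachable a y} ⟨a, Reachable.refl a⟩
      (fun x y hxy hx => Reachable.trans hx hxy.reachable) b

lemma connected_iff_cl (G : SimpleGraph V) : G.Connected ↔ Cl G ∅ ∅ := by
  rw [connected_iff]
  constructor
  · rintro ⟨⟨a⟩, h⟩
    refine ⟨⟨a, by simp⟩, fun P _ hne hP y _ => h P ?_ ?_ y⟩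
    · obtain ⟨a, -, ha⟩ := hne
      exact ⟨a, ha⟩
    · intro x y; exact hP x y (by simp) (by simp)
  · rintro ⟨⟨a, -⟩, h⟩
    refine ⟨⟨a⟩, fun P hne hP y => h P (by simp) ?_ ?_ y (by simp)⟩
    · obtain ⟨a, ha⟩ := hne
      exact ⟨a, by simp, ha⟩
    · intro x y _ _; exact hP x y

lemma connected_induce_iff (G : SimpleGraph V) (T : Set V) :
    (G.induce T).Connected ↔ Cl G ∅ Tᶜ := by
  rw [connected_iff]
  constructor
  · rintro ⟨⟨a⟩, h⟩
    refine ⟨⟨a, by simp⟩, ?_⟩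
    rintro P - ⟨b, hb, hbP⟩ hP y hy
    rw [Set.notMem_compl_iff] at hb hy
    exact h {z | (z : V) ∈ P} ⟨⟨b, hb⟩, hbP⟩
      (fun x y hxy => hP x y (by simp) (by simp) hxy) ⟨y, hy⟩
  · rintro ⟨⟨a, ha⟩, h⟩
    rw [Set.notMem_compl_iff] at ha
    refine ⟨⟨a, ha⟩, ?_⟩
    rintro P ⟨b, hb⟩ hP ⟨y, hy⟩
    have := h {z | ∃ hz : z ∈ T, ⟨z, hz⟩ ∈ P} (by simp) ⟨b, by simp, b.2, hb⟩ (by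
      rintro x y hx hy hxy ⟨hx', hxP⟩
      rw [Set.notMem_compl_iff] at hy
      exact ⟨hy, hP ⟨x, hx'⟩ ⟨y, hy⟩ hxy hxP⟩) y (by simpa using hy)
    exact this.2

lemma isTwoConnected_iff_s7 (G : SimpleGraph V) :
    IsTwoConnected G ↔ Cl G ∅ ∅ ∧ ∀ b, Cl G ∅ {b} := by
  unfold IsTwoConnected
  rw [connected_iff_cl]
  refine and_congr Iff.rfl (forall_congr' fun b => ?_)
  rw [connected_induce_iff]
  have : {u : V | u ≠ b}ᶜ = {b} := by ext; simp
  rw [this]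

lemma isTwoConnected_induce_iff_s7 (G : SimpleGraph V) (T : Set V) :
    IsTwoConnected (G.induce T) ↔ Cl G ∅ Tᶜ ∧ ∀ b ∈ T, Cl G ∅ (Tᶜ ∪ {b}) := by
  unfold IsTwoConnected
  rw [connected_induce_iff]
  refine and_congr Iff.rfl ?_
  have key : ∀ b (hb : b ∈ T), ((G.induce T).induce {u : T | u ≠ ⟨b, hb⟩}).Connected ↔
      Cl G ∅ (Tᶜ ∪ {b}) := by
    intro b hb
    have h2 : (Tᶜ ∪ {b}) = (T \ {b})ᶜ := by ext; simp; tauto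
    rw [h2, connected_induce_iff, ← connected_induce_iff, ← connected_induce_iff]
    let e : ((G.induce T).induce {u : T | u ≠ ⟨b, hb⟩}) ≃g G.induce (T \ {b}) :=
      { toFun := fun x => ⟨x.1.1, x.1.2, fun h => x.2 (Subtype.ext h)⟩
        invFun := fun x => ⟨⟨x.1, x.2.1⟩, fun h => x.2.2 (congrArg Subtype.val h)⟩
        left_inv := fun x => rfl
        right_inv := fun x => rfl
        map_rel_iff' := by intro x y; rfl }
    exact e.connected_iff
  constructor
  · intro h b hb
    exact (key b hb).1 (h ⟨b, hb⟩)
  · rintro h ⟨b, hb⟩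
    exact (key b hb).2 (h b hb)

/-- If `π` is the quotient map identifying `S`, connectivity of the quotient graph minus `X` is
expressed by `Cl`. -/
lemma cl_quotient {C : Type*} (G : SimpleGraph V) (K : SimpleGraph C) (S : Set V) (π : V → C)
    (hπ : Function.Surjective π) (hS : ∀ x y, π x = π y ↔ x = y ∨ (x ∈ S ∧ y ∈ S))
    (hK : ∀ c d, K.Adj c d ↔ c ≠ d ∧ ∃ x y, G.Adj x y ∧ π x = c ∧ π y = d) (X : Set C) :
    Cl K ∅ X ↔ Cl G S (π ⁻¹' X) := by
  constructor
  · rintro ⟨⟨c, hc⟩, h⟩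
    obtain ⟨a, rfl⟩ := hπ c
    refine ⟨⟨a, hc⟩, ?_⟩
    rintro P hinv ⟨b, hb, hbP⟩ hP y hy
    have hmem : ∀ x, π x ∈ π '' P → x ∈ P := by
      rintro x ⟨z, hz, hzx⟩
      rcases (hS _ _).1 hzx with rfl | ⟨h1, h2⟩
      · exact hz
      · exact hinv _ _ h1 h2 hz
    refine hmem y (h (π '' P) (by simp) ⟨π b, hb, b, hbP, rfl⟩ ?_ (π y) hy)
    intro c d hc hd hcd hcP
    obtain ⟨-, x, z, hxz, rfl, rfl⟩ := (hK c d).1 hcd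
    exact ⟨z, hP x z hc hd hxz (hmem x hcP), rfl⟩
  · rintro ⟨⟨a, ha⟩, h⟩
    refine ⟨⟨π a, ha⟩, ?_⟩
    rintro P - ⟨c, hc, hcP⟩ hP d hd
    obtain ⟨b, rfl⟩ := hπ c
    obtain ⟨y, rfl⟩ := hπ d
    refine h (π ⁻¹' P) ?_ ⟨b, hc, hcP⟩ ?_ y hd
    · intro x y hx hy hxP
      rwa [Set.mem_preimage, ← (hS x y).2 (Or.inr ⟨hx, hy⟩)]
    · intro x z hx hz hxz hxP
      by_cases he : π x = π z
      · rwa [Set.mem_preimage, ← he]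
      · exact hP (π x) (π z) hx hz ((hK _ _).2 ⟨he, x, z, hxz, rfl, rfl⟩) hxP

lemma isTwoConnected_contract_iff (G : SimpleGraph V) (F : Set (Sym2 V)) (S : Set V)
    (hF : ∀ x y, (fromEdgeSet F).Reachable x y ↔ x = y ∨ (x ∈ S ∧ y ∈ S)) :
    IsTwoConnected (contractEdges G F) ↔ Cl G S ∅ ∧ ∀ b, Cl G S (cls S b) := by
  have hS : ∀ x y, (fromEdgeSet F).connectedComponentMk x = (fromEdgeSet F).connectedComponentMk y
      ↔ x = y ∨ (x ∈ S ∧ y ∈ S) := by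
    intro x y; rw [ConnectedComponent.eq, hF]
  have hsurj : Function.Surjective (fromEdgeSet F).connectedComponentMk :=
    fun c => c.exists_rep
  have hK : ∀ c d, (contractEdges G F).Adj c d ↔ c ≠ d ∧ ∃ x y, G.Adj x y ∧
      (fromEdgeSet F).connectedComponentMk x = c ∧
      (fromEdgeSet F).connectedComponentMk y = d := by
    intro c d
    unfold contractEdges
    rw [fromRel_adj]
    refine and_congr Iff.rfl ⟨?_, Or.inl⟩
    rintro (h | ⟨x, y, hxy, hx, hy⟩)
    · exact h
    · exact ⟨y, x, hxy.symm, hy, hx⟩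
  have hq := cl_quotient G (contractEdges G F) S _ hsurj hS hK
  rw [isTwoConnected_iff_s7, hq]
  refine and_congr (by simp) ?_
  have hcl : ∀ b, (fromEdgeSet F).connectedComponentMk ⁻¹'
      {(fromEdgeSet F).connectedComponentMk b} = cls S b := by
    intro b; ext x
    simp only [Set.mem_preimage, Set.mem_singleton_iff, hS, cls, Set.mem_ofPred_eq]
  constructor
  · intro h b
    rw [← hcl, ← hq]
    exact h _
  · intro h c
    obtain ⟨b, rfl⟩ := hsurj c
    rw [hq, hcl]
    exact h b

lemma reachable_edgesIn (G : SimpleGraph V) (S : Set V) (hc : (G.induce S).Connected) (x y : V) :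
    (fromEdgeSet (edgesIn G S)).Reachable x y ↔ x = y ∨ (x ∈ S ∧ y ∈ S) := by
  have hadj : ∀ a b, (fromEdgeSet (edgesIn G S)).Adj a b ↔ G.Adj a b ∧ a ∈ S ∧ b ∈ S := by
    intro a b
    rw [fromEdgeSet_adj]
    simp only [edgesIn, Set.mem_ofPred_eq, mem_edgeSet, Sym2.mem_iff, forall_eq_or_imp, forall_eq]
    constructor
    · exact fun h => h.1
    · exact fun h => ⟨h, h.1.ne⟩
  constructor
  · rintro ⟨p⟩
    induction p with
    | nil => exact Or.inl rfl
    | cons h p ih =>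
      rw [hadj] at h
      rcases ih with rfl | ih
      · exact Or.inr ⟨h.2.1, h.2.2⟩
      · exact Or.inr ⟨h.2.1, ih.2⟩
  · rintro (rfl | ⟨hx, hy⟩)
    · exact Reachable.refl _
    · rw [connected_induce_iff] at hc
      refine hc.2 {z | (fromEdgeSet (edgesIn G S)).Reachable x z} (by simp)
        ⟨x, by simpa using hx, Reachable.refl _⟩ ?_ y (by simpa using hy)
      intro a b ha hb hab har
      refine Reachable.trans har (Adj.reachable ((hadj a b).2 ⟨hab, ?_, ?_⟩))
      · simpa using ha
      · simpa using hb

lemma reachable_pair {a b : V} (hab : a ≠ b) (x y : V) :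
    (fromEdgeSet {s(a, b)}).Reachable x y ↔
      x = y ∨ (x ∈ ({a, b} : Set V) ∧ y ∈ ({a, b} : Set V)) := by
  have hadj : (fromEdgeSet {s(a, b)}).Adj a b := by simp [hab]
  constructor
  · rintro ⟨p⟩
    induction p with
    | nil => exact Or.inl rfl
    | cons h p ih =>
      simp only [fromEdgeSet_adj, Set.mem_singleton_iff, Sym2.eq_iff] at h
      simp only [Set.mem_insert_iff, Set.mem_singleton_iff] at ih ⊢
      grind
  · simp only [Set.mem_insert_iff, Set.mem_singleton_iff]
    rintro (rfl | ⟨rfl | rfl, rfl | rfl⟩)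
    · exact Reachable.refl _
    · exact Reachable.refl _
    · exact hadj.reachable
    · exact hadj.symm.reachable
    · exact Reachable.refl _

/-- A vertex with at most one neighbour `y` inside a `2`-connected induced subgraph forces that
subgraph to be the single edge `xy`. -/
lemma eq_pair_of_leaf (G : SimpleGraph V) (T : Set V) (x y : V) (hx : x ∈ T)
    (h : Cl G ∅ Tᶜ ∧ ∀ b ∈ T, Cl G ∅ (Tᶜ ∪ {b}))
    (hxy : ∀ z ∈ T, G.Adj x z → z = y) : T = {x, y} := by
  obtain ⟨z, hz⟩ := (h.2 x hx).1
  simp only [Set.mem_union, Set.mem_compl_iff, Set.mem_singleton_iff, not_or, not_not] at hz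
  have hy : y ∈ T := by
    by_contra hy
    have := h.1.2 {x} (by simp) ⟨x, by simpa using hx, rfl⟩ (by
      rintro a b - hb hab rfl
      rw [Set.notMem_compl_iff] at hb
      exact absurd (hxy b hb hab ▸ hb) hy) z (by simpa using hz.1)
    exact hz.2 this
  ext t
  simp only [Set.mem_insert_iff, Set.mem_singleton_iff]
  constructor
  · intro ht
    by_contra! hne
    by_cases hxy' : x = y
    · have := h.1.2 {x} (by simp) ⟨x, by simpa using hx, rfl⟩ (by
        rintro a b - hb hab rfl
        rw [Set.notMem_compl_iff] at hb
        exact (hxy b hb hab).trans hxy'.symm) t (by simpa using ht)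
      exact hne.1 this
    have := (h.2 y hy).2 {x} (by simp) ⟨x, by simp [hx, hxy'], rfl⟩ (by
      rintro a b - hb hab rfl
      simp only [Set.mem_union, Set.mem_compl_iff, Set.mem_singleton_iff, not_or, not_not] at hb
      exact absurd (hxy b hb.1 hab) hb.2) t (by simp [ht, hne.2])
    exact hne.1 this
  · rintro (rfl | rfl) <;> assumption

/-! ### Subdivisions -/

/-- The data of a subdivision of the edge `uv` of `G` with the new path indexed by natural
numbers: its vertices are `Q 0 = φ u, Q 1, …, Q m = φ v` (the values `Q i` with `i > m` are
irrelevant). -/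
structure Sub (G : SimpleGraph V) (u v : V) (G' : SimpleGraph W) (φ : V → W) (Q : ℕ → W)
    (m : ℕ) : Prop where
  inj : Function.Injective φ
  Qinj : ∀ i j, i ≤ m → j ≤ m → Q i = Q j → i = j
  Q0 : Q 0 = φ u
  Qm : Q m = φ v
  int : ∀ i, 0 < i → i < m → ∀ a, φ a ≠ Q i
  cover : ∀ x, (∃ a, φ a = x) ∨ ∃ i, 0 < i ∧ i < m ∧ Q i = x
  adj : ∀ x y, G'.Adj x y ↔
    (∃ a b, G.Adj a b ∧ s(a, b) ≠ s(u, v) ∧ φ a = x ∧ φ b = y) ∨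
    ∃ i, i < m ∧ s(x, y) = s(Q i, Q (i + 1))

lemma exists_sub {G : SimpleGraph V} {u v : V} {m : ℕ} {G' : SimpleGraph W}
    {q : Fin (m + 1) → W} (h : IsSubdivisionAt G u v G' q) :
    ∃ φ Q, Sub G u v G' φ Q m ∧
      ∀ i : Fin m, q i.castSucc = Q i ∧ q i.succ = Q (i + 1) := by
  obtain ⟨φ, hφ, hq, h0, hm, hint, hcov, hadj⟩ := h
  have hQ : ∀ i (hi : i < m + 1), q ⟨min i m, by omega⟩ = q ⟨i, hi⟩ := by
    intro i hi
    congr 2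
    omega
  have hQs : ∀ i : Fin m, q i.castSucc = q ⟨min (i : ℕ) m, by omega⟩ ∧
      q i.succ = q ⟨min ((i : ℕ) + 1) m, by omega⟩ := by
    intro i
    rw [hQ i (by omega), hQ (i + 1) (by omega)]
    exact ⟨rfl, rfl⟩
  refine ⟨φ, fun i => q ⟨min i m, by omega⟩, ⟨hφ, ?_, ?_, ?_, ?_, ?_, ?_⟩, hQs⟩
  · intro i j hi hj hij
    have := Fin.mk.inj_iff.1 (hq hij)
    omega
  · rw [← h0]; exact hQ 0 (by omega)
  · rw [← hm]; exact hQ m (by omega)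
  · intro i hi him a ha
    have := hint ⟨min i m, by omega⟩ (by rw [Ne, Fin.ext_iff]; simp; omega)
      (by rw [Ne, Fin.ext_iff]; simp; omega)
    exact this ⟨a, ha⟩
  · intro x
    rcases hcov x with h | ⟨⟨i, hi⟩, rfl⟩
    · exact Or.inl h
    · rcases Nat.eq_zero_or_pos i with rfl | hpos
      · exact Or.inl ⟨u, h0.symm⟩
      · rcases Nat.lt_or_ge i m with hlt | hge
        · exact Or.inr ⟨i, hpos, hlt, hQ i hi⟩
        · obtain rfl : i = m := by omega
          exact Or.inl ⟨v, hm.symm⟩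
  · intro x y
    rw [hadj]
    refine or_congr Iff.rfl ⟨?_, ?_⟩
    · rintro ⟨i, hi⟩
      refine ⟨i, i.2, ?_⟩
      rw [hi, (hQs i).1, (hQs i).2]
    · rintro ⟨i, him, hi⟩
      refine ⟨⟨i, him⟩, ?_⟩
      rw [hi, (hQs ⟨i, him⟩).1, (hQs ⟨i, him⟩).2]

namespace Sub

variable {G : SimpleGraph V} {u v : V} {G' : SimpleGraph W} {φ : V → W} {Q : ℕ → W} {m : ℕ}

lemma symm (h : Sub G u v G' φ Q m) : Sub G v u G' φ (fun i => Q (m - i)) m where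
  inj := h.inj
  Qinj i j hi hj hij := by
    have := h.Qinj _ _ (by omega) (by omega) hij
    omega
  Q0 := by simpa using h.Qm
  Qm := by simpa using h.Q0
  int i hi him a := h.int (m - i) (by omega) (by omega) a
  cover x := by
    rcases h.cover x with hx | ⟨i, h0, hm, hi⟩
    · exact Or.inl hx
    · refine Or.inr ⟨m - i, by omega, by omega, ?_⟩
      rw [← hi]; congr 1; omega
  adj x y := by
    rw [h.adj, Sym2.eq_swap (a := v)]
    refine or_congr Iff.rfl ⟨?_, ?_⟩
    · rintro ⟨i, him, hi⟩
      refine ⟨m - 1 - i, by omega, ?_⟩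
      rw [hi, Sym2.eq_swap]
      congr 2
      · omega
      · omega
    · rintro ⟨i, him, hi⟩
      refine ⟨m - 1 - i, by omega, ?_⟩
      have h1 : m - (i + 1) = m - 1 - i := by omega
      have h2 : m - i = m - 1 - i + 1 := by omega
      rw [hi, Sym2.eq_swap, h1, h2]

/-- Contracting the new path onto `u` turns connectivity of `G'` into connectivity of `G`,
provided that either `u` survives or the whole interior of the path is deleted. -/
lemma transfer (h : Sub G u v G' φ Q m) (huv : G.Adj u v) {S X : Set V} {S' X' : Set W}
    (hX : ∀ a, φ a ∈ X' ↔ a ∈ X) (hS : ∀ a, φ a ∈ S' ↔ a ∈ S)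
    (hS2 : ∀ i, 0 < i → i < m → Q i ∈ S' → u ∈ S)
    (hu : u ∉ X ∨ ∀ i, 0 < i → i < m → Q i ∈ X') (hc : Cl G' S' X') : Cl G S X := by
  obtain ⟨⟨x, hx⟩, hc⟩ := hc
  refine ⟨?_, ?_⟩
  · rcases h.cover x with ⟨a, rfl⟩ | ⟨i, h0, hm, rfl⟩
    · exact ⟨a, fun ha => hx ((hX a).2 ha)⟩
    · rcases hu with hu | hu
      · exact ⟨u, hu⟩
      · exact absurd (hu i h0 hm) hx
  rintro P hinv ⟨a, ha, haP⟩ hP y hy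
  -- `P'` is the preimage of `P` under the map sending the interior of the path to `u`.
  set P' : Set W := {x | (∃ a, φ a = x ∧ a ∈ P) ∨ (∃ i, 0 < i ∧ i < m ∧ Q i = x) ∧ u ∈ P}
    with hP'
  have h1 : ∀ a, φ a ∈ P' ↔ a ∈ P := by
    intro a
    constructor
    · rintro (⟨b, hb, hbP⟩ | ⟨⟨i, h0, hm, hi⟩, -⟩)
      · rwa [← h.inj hb]
      · exact absurd hi.symm (h.int i h0 hm a)
    · exact fun ha => Or.inl ⟨a, rfl, ha⟩
  have h2 : ∀ i, 0 < i → i < m → (Q i ∈ P' ↔ u ∈ P) := by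
    intro i h0 hm
    constructor
    · rintro (⟨b, hb, hbP⟩ | ⟨-, hu⟩)
      · exact absurd hb (h.int i h0 hm b)
      · exact hu
    · exact fun hu => Or.inr ⟨⟨i, h0, hm, rfl⟩, hu⟩
  have h3 : ∀ i, i < m → (Q i ∈ P' ↔ u ∈ P) := by
    intro i hm
    rcases Nat.eq_zero_or_pos i with rfl | h0
    · rw [h.Q0, h1]
    · exact h2 i h0 hm
  have hstep : ∀ i, i < m → Q i ∉ X' → Q (i + 1) ∉ X' → (Q i ∈ P' ↔ Q (i + 1) ∈ P') := by
    intro i him hi hi1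
    rcases Nat.lt_or_ge (i + 1) m with hlt | hge
    · rw [h3 i him, h3 (i + 1) hlt]
    · obtain rfl : i + 1 = m := by omega
      rw [h.Qm, hX] at hi1
      have huX : u ∉ X := by
        rcases hu with hu | hu
        · exact hu
        · rcases Nat.eq_zero_or_pos i with rfl | h0
          · rwa [h.Q0, hX] at hi
          · exact absurd (hu i h0 him) hi
      rw [h3 i him, h.Qm, h1]
      exact ⟨hP u v huX hi1 huv, hP v u hi1 huX huv.symm⟩
  refine (h1 y).1 (hc P' ?_ ⟨φ a, fun h => ha ((hX a).1 h), (h1 a).2 haP⟩ ?_ (φ y)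
    fun h => hy ((hX y).1 h))
  · have hSP : ∀ x ∈ S', ∃ a ∈ S, (x ∈ P' ↔ a ∈ P) := by
      intro x hx
      rcases h.cover x with ⟨a, rfl⟩ | ⟨i, h0, hm, rfl⟩
      · exact ⟨a, (hS a).1 hx, h1 a⟩
      · exact ⟨u, hS2 i h0 hm hx, h2 i h0 hm⟩
    intro x y hx hy hxP
    obtain ⟨a, haS, ha⟩ := hSP x hx
    obtain ⟨b, hbS, hb⟩ := hSP y hy
    exact hb.2 (hinv a b haS hbS (ha.1 hxP))
  · intro x y hx hy hxy hxP
    rcases (h.adj x y).1 hxy with ⟨a, b, hab, -, rfl, rfl⟩ | ⟨i, him, hi⟩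
    · rw [h1] at hxP ⊢
      rw [hX] at hx hy
      exact hP a b hx hy hab hxP
    · rcases Sym2.eq_iff.1 hi with ⟨rfl, rfl⟩ | ⟨rfl, rfl⟩
      · exact (hstep i him hx hy).1 hxP
      · exact (hstep i him hy hx).2 hxP

lemma ne (h : Sub G u v G' φ Q m) (hm : 0 < m) : u ≠ v := by
  rintro rfl
  have := h.Qinj 0 m (by omega) le_rfl (h.Q0.trans h.Qm.symm)
  omega

lemma adj_Q (h : Sub G u v G' φ Q m) {i : ℕ} (hi : i < m) : G'.Adj (Q i) (Q (i + 1)) :=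
  (h.adj _ _).2 (Or.inr ⟨i, hi, rfl⟩)

lemma adj_φ (h : Sub G u v G' φ Q m) {a b : V} (hab : G.Adj a b) (hne : s(a, b) ≠ s(u, v)) :
    G'.Adj (φ a) (φ b) :=
  (h.adj _ _).2 (Or.inl ⟨a, b, hab, hne, rfl, rfl⟩)

/-- An interior vertex of the path is adjacent only to its two neighbours on the path. -/
lemma adj_int (h : Sub G u v G' φ Q m) {i : ℕ} (h0 : 0 < i) (hm : i < m) {y : W}
    (hy : G'.Adj (Q i) y) : y = Q (i - 1) ∨ y = Q (i + 1) := by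
  rcases (h.adj _ _).1 hy with ⟨a, b, -, -, ha, -⟩ | ⟨j, hj, hij⟩
  · exact absurd ha (h.int i h0 hm a)
  · rcases Sym2.eq_iff.1 hij with ⟨h1, rfl⟩ | ⟨h1, rfl⟩
    · have := h.Qinj _ _ (by omega) (by omega) h1
      subst this; exact Or.inr rfl
    · have := h.Qinj _ _ (by omega) (by omega) h1
      subst this; exact Or.inl rfl

lemma adj_φ_iff (h : Sub G u v G' φ Q m) (hm : 2 ≤ m) (a b : V) :
    G'.Adj (φ a) (φ b) ↔ G.Adj a b ∧ s(a, b) ≠ s(u, v) := by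
  constructor
  · intro hab
    rcases (h.adj _ _).1 hab with ⟨a', b', hab, hne, ha, hb⟩ | ⟨j, hj, hij⟩
    · rw [← h.inj ha, ← h.inj hb]; exact ⟨hab, hne⟩
    · exfalso
      rcases Nat.eq_zero_or_pos j with rfl | h0
      · rcases Sym2.eq_iff.1 hij with ⟨h1, h2⟩ | ⟨h1, h2⟩
        · exact h.int _ (by omega) (by omega) _ h2
        · exact h.int _ (by omega) (by omega) _ h1
      · rcases Sym2.eq_iff.1 hij with ⟨h1, h2⟩ | ⟨h1, h2⟩
        · exact h.int _ h0 hj _ h1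
        · exact h.int _ h0 hj _ h2
  · rintro ⟨h1, h2⟩
    exact h.adj_φ h1 h2

/-- A set closed under adjacency outside `X'` contains all or none of the vertices of a segment
of the path avoiding `X'`. -/
lemma path_closed (h : Sub G u v G' φ Q m) {X' P : Set W}
    (hP : ∀ x y, x ∉ X' → y ∉ X' → G'.Adj x y → x ∈ P → y ∈ P) {i j : ℕ} (hij : i ≤ j)
    (hj : j ≤ m) (hX : ∀ k, i ≤ k → k ≤ j → Q k ∉ X') : Q i ∈ P ↔ Q j ∈ P := by
  induction j, hij using Nat.le_induction with
  | base => rfl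
  | succ j hij ih =>
    rw [ih (by omega) fun k h1 h2 => hX k h1 (by omega)]
    have hadj := h.adj_Q (i := j) (by omega)
    have h1 := hX j hij (by omega)
    have h2 := hX (j + 1) (by omega) le_rfl
    exact ⟨hP _ _ h1 h2 hadj, hP _ _ h2 h1 hadj.symm⟩

/-- Deleting a set of old vertices avoiding `u` and `v` preserves connectivity. -/
lemma cl_of_avoid (h : Sub G u v G' φ Q m) {X : Set V} (hu : u ∉ X) (hv : v ∉ X)
    (hc : Cl G ∅ X) : Cl G' ∅ (φ '' X) := by
  have hX : ∀ a, φ a ∈ φ '' X ↔ a ∈ X := fun a => h.inj.mem_set_image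
  have hQX : ∀ k ≤ m, Q k ∉ φ '' X := by
    rintro k hk ⟨a, ha, hka⟩
    rcases Nat.eq_zero_or_pos k with rfl | h0
    · rw [h.Q0] at hka; exact hu (h.inj hka ▸ ha)
    · rcases Nat.lt_or_ge k m with hlt | hge
      · exact h.int k h0 hlt a hka
      · obtain rfl : k = m := by omega
        rw [h.Qm] at hka; exact hv (h.inj hka ▸ ha)
  refine ⟨⟨φ u, by rwa [hX]⟩, ?_⟩
  rintro P - ⟨x, hx, hxP⟩ hP y hy
  have hpath : ∀ i ≤ m, (φ u ∈ P ↔ Q i ∈ P) := by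
    intro i hi
    rw [← h.Q0]
    exact h.path_closed hP (Nat.zero_le i) hi fun k _ hk => hQX k (by omega)
  have hall : ∀ a, a ∉ X → φ a ∈ P := by
    refine hc.2 (φ ⁻¹' P) (by simp) ?_ ?_
    · rcases h.cover x with ⟨a, rfl⟩ | ⟨i, h0, hm, rfl⟩
      · exact ⟨a, by rwa [hX] at hx, hxP⟩
      · exact ⟨u, hu, (hpath i hm.le).2 hxP⟩
    · intro a b ha hb hab haP
      by_cases he : s(a, b) = s(u, v)
      · have huv := hpath m le_rfl
        rw [h.Qm] at huv
        rcases Sym2.eq_iff.1 he with ⟨rfl, rfl⟩ | ⟨rfl, rfl⟩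
        · exact huv.1 haP
        · exact huv.2 haP
      · exact hP _ _ (by rwa [hX]) (by rwa [hX]) (h.adj_φ hab he) haP
  rcases h.cover y with ⟨a, rfl⟩ | ⟨i, h0, hm, rfl⟩
  · exact hall a (by rwa [hX] at hy)
  · exact (hpath i hm.le).1 (hall u hu)

lemma cl_del_left (h : Sub G u v G' φ Q m) (hm : 0 < m) (hc : Cl G ∅ {u}) :
    Cl G' ∅ {φ u} := by
  have huv := h.ne hm
  have hQX : ∀ k, 1 ≤ k → k ≤ m → Q k ∉ ({φ u} : Set W) := by
    intro k h1 hk hku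
    rw [Set.mem_singleton_iff, ← h.Q0] at hku
    have := h.Qinj _ _ hk (by omega) hku
    omega
  have hX : ∀ a, φ a ∈ ({φ u} : Set W) ↔ a ∈ ({u} : Set V) := by
    intro a; simp [h.inj.eq_iff]
  have hv : v ∉ ({u} : Set V) := fun h => huv h.symm
  refine ⟨⟨φ v, by rwa [hX]⟩, ?_⟩
  rintro P - ⟨x, hx, hxP⟩ hP y hy
  have hpath : ∀ i, 1 ≤ i → i ≤ m → (Q i ∈ P ↔ φ v ∈ P) := by
    intro i h1 hi
    rw [← h.Qm]
    exact h.path_closed hP hi le_rfl fun k hk hk' => hQX k (by omega) hk'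
  have hall : ∀ a, a ∉ ({u} : Set V) → φ a ∈ P := by
    refine hc.2 (φ ⁻¹' P) (by simp) ?_ ?_
    · rcases h.cover x with ⟨a, rfl⟩ | ⟨i, h0, hm, rfl⟩
      · exact ⟨a, by rwa [hX] at hx, hxP⟩
      · exact ⟨v, hv, (hpath i h0 hm.le).1 hxP⟩
    · intro a b ha hb hab haP
      refine hP _ _ (by rwa [hX]) (by rwa [hX]) (h.adj_φ hab ?_) haP
      intro he
      rcases Sym2.eq_iff.1 he with ⟨rfl, rfl⟩ | ⟨rfl, rfl⟩
      · exact ha rfl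
      · exact hb rfl
  rcases h.cover y with ⟨a, rfl⟩ | ⟨i, h0, hm, rfl⟩
  · exact hall a (by rwa [hX] at hy)
  · exact (hpath i h0 hm.le).2 (hall v hv)

lemma cl_del_int (h : Sub G u v G' φ Q m) (hc : Cl (G.deleteEdges {s(u, v)}) ∅ ∅) {i : ℕ}
    (hi0 : 0 < i) (him : i < m) : Cl G' ∅ {Q i} := by
  have hX : ∀ a, φ a ∉ ({Q i} : Set W) := fun a => h.int i hi0 him a
  have hQX : ∀ k, k ≤ m → k ≠ i → Q k ∉ ({Q i} : Set W) := by
    intro k hk hne hki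
    exact hne (h.Qinj _ _ hk him.le hki)
  refine ⟨⟨φ v, hX v⟩, ?_⟩
  rintro P - ⟨x, hx, hxP⟩ hP y hy
  have hpath1 : ∀ j, j < i → (φ u ∈ P ↔ Q j ∈ P) := by
    intro j hj
    rw [← h.Q0]
    exact h.path_closed hP (Nat.zero_le j) (by omega) fun k _ hk => hQX k (by omega) (by omega)
  have hpath2 : ∀ j, i < j → j ≤ m → (Q j ∈ P ↔ φ v ∈ P) := by
    intro j hj hjm
    rw [← h.Qm]
    exact h.path_closed hP hjm le_rfl fun k _ hk => hQX k (by omega) (by omega)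
  have hne : ∀ j, Q j ∉ ({Q i} : Set W) → j < i ∨ i < j := by
    intro j hj
    refine lt_or_gt_of_ne ?_
    rintro rfl
    exact hj rfl
  have hall : ∀ a, φ a ∈ P := by
    intro a
    refine hc.2 (φ ⁻¹' P) (by simp) ?_ ?_ a (by simp)
    · rcases h.cover x with ⟨a, rfl⟩ | ⟨j, h0, hm, rfl⟩
      · exact ⟨a, by simp, hxP⟩
      · rcases hne j hx with hj | hj
        · exact ⟨u, by simp, (hpath1 j hj).2 hxP⟩
        · exact ⟨v, by simp, (hpath2 j hj hm.le).1 hxP⟩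
    · intro a b _ _ hab haP
      rw [deleteEdges_adj] at hab
      exact hP _ _ (hX a) (hX b) (h.adj_φ hab.1 hab.2) haP
  rcases h.cover y with ⟨a, rfl⟩ | ⟨j, h0, hm, rfl⟩
  · exact hall a
  · rcases hne j hy with hj | hj
    · exact (hpath1 j hj).1 (hall u)
    · exact (hpath2 j hj hm.le).2 (hall v)

end Sub

/-- A `2`-connected graph with a third vertex has no bridge. -/
lemma cl_deleteEdge {G : SimpleGraph V} (hG : IsTwoConnected G) {u v z : V} (huv : u ≠ v)
    (hzu : z ≠ u) (hzv : z ≠ v) : Cl (G.deleteEdges {s(u, v)}) ∅ ∅ := by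
  rw [isTwoConnected_iff_s7] at hG
  refine ⟨⟨z, by simp⟩, ?_⟩
  rintro P - ⟨x, -, hxP⟩ hP y -
  have key : ∀ c, (c = u ∨ c = v) → ∀ x y, x ≠ c → y ≠ c → x ∈ P → y ∈ P := by
    intro c hc x y hx hy hxP
    refine (hG.2 c).2 P (by simp) ⟨x, hx, hxP⟩ ?_ y hy
    intro a b ha hb hab haP
    refine hP a b (by simp) (by simp) ?_ haP
    rw [deleteEdges_adj]
    refine ⟨hab, fun he => ?_⟩
    simp only [Set.mem_singleton_iff] at ha hb
    rcases Sym2.eq_iff.1 he with ⟨rfl, rfl⟩ | ⟨rfl, rfl⟩ <;> rcases hc with rfl | rfl <;> simp at ha hb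
  have hz : z ∈ P := by
    by_cases hx : x = u
    · exact key v (Or.inr rfl) x z (by rw [hx]; exact huv) hzv hxP
    · exact key u (Or.inl rfl) x z hx hzu hxP
  by_cases hy : y = u
  · exact key v (Or.inr rfl) z y hzv (by rw [hy]; exact huv) hz
  · exact key u (Or.inl rfl) z y hzu hy hz

namespace Sub

variable {G : SimpleGraph V} {u v : V} {G' : SimpleGraph W} {φ : V → W} {Q : ℕ → W} {m : ℕ}

lemma isTwoConnected (h : Sub G u v G' φ Q m) (hm : 0 < m) (hG : IsTwoConnected G) {z : V}
    (hzu : z ≠ u) (hzv : z ≠ v) : IsTwoConnected G' := by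
  have hdel := cl_deleteEdge hG (h.ne hm) hzu hzv
  rw [isTwoConnected_iff_s7] at hG ⊢
  refine ⟨by simpa using h.cl_of_avoid (X := ∅) (by simp) (by simp) hG.1, fun x => ?_⟩
  rcases h.cover x with ⟨a, rfl⟩ | ⟨i, h0, hm, rfl⟩
  · by_cases hu : a = u
    · subst hu; exact h.cl_del_left hm (hG.2 _)
    by_cases hv : a = v
    · subst hv; exact h.symm.cl_del_left hm (hG.2 _)
    simpa using h.cl_of_avoid (X := {a}) (fun h => hu h.symm) (fun h => hv h.symm) (hG.2 a)
  · exact h.cl_del_int hdel h0 hm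

lemma isTwoConnected_of (h : Sub G u v G' φ Q m) (hm : 0 < m) (huv : G.Adj u v)
    (hG : IsTwoConnected G') : IsTwoConnected G := by
  rw [isTwoConnected_iff_s7] at hG ⊢
  refine ⟨h.transfer huv (X' := ∅) (S' := ∅) (by simp) (by simp) (by simp) (by simp) hG.1,
    fun b => ?_⟩
  have hX : ∀ a, φ a ∈ ({φ b} : Set W) ↔ a ∈ ({b} : Set V) := by
    intro a; simp [h.inj.eq_iff]
  by_cases hb : u = b
  · exact h.symm.transfer huv.symm (S' := ∅) hX (by simp) (by simp)
      (Or.inl fun hv => h.ne hm (hb.trans hv.symm)) (hG.2 (φ b))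
  · exact h.transfer huv (S' := ∅) hX (by simp) (by simp) (Or.inl hb) (hG.2 (φ b))

/-- `2`-connectivity of contractions descends from `G'` to `G`, if the contracted set either
contains the whole path, or contains no interior vertex and not both ends of it. -/
lemma contract_of (h : Sub G u v G' φ Q m) (hm : 0 < m) (huv : G.Adj u v) {S : Set V}
    {S' : Set W} (hS : ∀ a, φ a ∈ S' ↔ a ∈ S)
    (hcase : ((∀ i, 0 < i → i < m → Q i ∉ S') ∧ ¬ (u ∈ S ∧ v ∈ S)) ∨ ∀ i ≤ m, Q i ∈ S')
    (hG : Cl G' S' ∅ ∧ ∀ b, Cl G' S' (cls S' b)) : Cl G S ∅ ∧ ∀ b, Cl G S (cls S b) := by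
  have hSu : ∀ i, 0 < i → i < m → Q i ∈ S' → u ∈ S := by
    intro i h0 him hi
    rcases hcase with hc | hc
    · exact absurd hi (hc.1 i h0 him)
    · rw [← hS, ← h.Q0]; exact hc 0 (by omega)
  have hSv : ∀ i, 0 < i → i < m → Q (m - i) ∈ S' → v ∈ S := by
    intro i h0 him hi
    rcases hcase with hc | hc
    · exact absurd hi (hc.1 (m - i) (by omega) (by omega))
    · rw [← hS, ← h.Qm]; exact hc m le_rfl
  refine ⟨h.transfer huv (X' := ∅) (by simp) hS hSu (by simp) hG.1, fun b => ?_⟩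
  have hX : ∀ a, φ a ∈ cls S' (φ b) ↔ a ∈ cls S b := by
    intro a; simp [cls, h.inj.eq_iff, hS]
  by_cases hu : u ∈ cls S b
  · rcases hcase with hc | hc
    · refine h.symm.transfer huv.symm hX hS hSv (Or.inl ?_) (hG.2 (φ b))
      intro hv
      have hne := h.ne hm
      simp only [cls, Set.mem_ofPred_eq] at hu hv
      grind
    · refine h.transfer huv hX hS hSu (Or.inr ?_) (hG.2 (φ b))
      intro i h0 him
      have huS : u ∈ S := by rw [← hS, ← h.Q0]; exact hc 0 (by omega)
      have hbS : b ∈ S := by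
        rcases hu with rfl | hu
        · exact huS
        · exact hu.2
      exact Or.inr ⟨hc i him.le, (hS b).2 hbS⟩
  · exact h.transfer huv hX hS hSu (Or.inl hu) (hG.2 (φ b))

/-- If `S'` contains the whole path and induces a `2`-connected subgraph of `G'`, the set of old
vertices in `S'` induces a `2`-connected subgraph of `G`. -/
lemma induce_of (h : Sub G u v G' φ Q m) (hm : 0 < m) (huv : G.Adj u v) {S : Set V}
    {S' : Set W} (hS : ∀ a, φ a ∈ S' ↔ a ∈ S) (hu : u ∈ S) (hv : v ∈ S)
    (hG : Cl G' ∅ S'ᶜ ∧ ∀ b ∈ S', Cl G' ∅ (S'ᶜ ∪ {b})) :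
    Cl G ∅ Sᶜ ∧ ∀ b ∈ S, Cl G ∅ (Sᶜ ∪ {b}) := by
  refine ⟨h.transfer huv (S' := ∅) (by simp [hS]) (by simp) (by simp) (by simp [hu]) hG.1,
    fun b hb => ?_⟩
  have hX : ∀ a, φ a ∈ S'ᶜ ∪ {φ b} ↔ a ∈ Sᶜ ∪ {b} := by
    intro a; simp [h.inj.eq_iff, hS]
  by_cases hub : u = b
  · exact h.symm.transfer huv.symm (S' := ∅) hX (by simp) (by simp)
      (Or.inl (by simp [hv, ← hub, (h.ne hm).symm])) (hG.2 (φ b) ((hS b).2 hb))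
  · exact h.transfer huv (S' := ∅) hX (by simp) (by simp) (Or.inl (by simp [hu, hub]))
      (hG.2 (φ b) ((hS b).2 hb))

/-- If `S'` has no interior path vertex, `G'` induces on it what `G` (without `uv`) induces on the
corresponding old vertices. -/
lemma induce_of_old (h : Sub G u v G' φ Q m) {S : Set V} {S' : Set W}
    (hS : ∀ a, φ a ∈ S' ↔ a ∈ S) (hint : ∀ i, 0 < i → i < m → Q i ∉ S') (hm : 2 ≤ m)
    (hG : Cl G' ∅ S'ᶜ ∧ ∀ b ∈ S', Cl G' ∅ (S'ᶜ ∪ {b})) :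
    Cl G ∅ Sᶜ ∧ ∀ b ∈ S, Cl G ∅ (Sᶜ ∪ {b}) := by
  have key : ∀ (X : Set V) (X' : Set W), (∀ a, φ a ∈ X' ↔ a ∈ X) →
      (∀ i, 0 < i → i < m → Q i ∈ X') → Cl G' ∅ X' → Cl G ∅ X := by
    rintro X X' hX hQ ⟨⟨x, hx⟩, hc⟩
    have hold : ∀ x, x ∉ X' → ∃ a, a ∉ X ∧ φ a = x := by
      intro x hx
      rcases h.cover x with ⟨a, rfl⟩ | ⟨i, h0, him, rfl⟩
      · exact ⟨a, by rwa [hX] at hx, rfl⟩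
      · exact absurd (hQ i h0 him) hx
    obtain ⟨a, ha, rfl⟩ := hold x hx
    refine ⟨⟨a, ha⟩, ?_⟩
    rintro P - ⟨b, hb, hbP⟩ hP y hy
    have := hc (φ '' P) (by simp) ⟨φ b, by rwa [hX], b, hbP, rfl⟩ (by
      rintro _ y hx hy hxy ⟨c, hc, rfl⟩
      obtain ⟨d, hd, rfl⟩ := hold y hy
      rw [hX] at hx
      exact ⟨d, hP c d hx hd ((h.adj_φ_iff hm c d).1 hxy).1 hc, rfl⟩) (φ y) (by rwa [hX])
    exact h.inj.mem_set_image.1 this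
  refine ⟨key _ _ (by simp [hS]) (fun i h0 him => hint i h0 him) hG.1, fun b hb => ?_⟩
  exact key _ _ (by intro a; simp [h.inj.eq_iff, hS]) (fun i h0 him => Or.inl (hint i h0 him))
    (hG.2 (φ b) ((hS b).2 hb))

lemma deleteEdge (h : Sub G u v G' φ Q m) (hm : 2 ≤ m) {a b : V} :
    Sub (G.deleteEdges {s(a, b)}) u v (G'.deleteEdges {s(φ a, φ b)}) φ Q m where
  inj := h.inj
  Qinj := h.Qinj
  Q0 := h.Q0
  Qm := h.Qm
  int := h.int
  cover := h.cover
  adj x y := by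
    rw [deleteEdges_adj, h.adj]
    have hmap : ∀ c d, s(φ c, φ d) = s(φ a, φ b) ↔ s(c, d) = s(a, b) := by
      intro c d
      simp [h.inj.eq_iff]
    constructor
    · rintro ⟨⟨c, d, hcd, hne, rfl, rfl⟩ | hp, hxy⟩
      · refine Or.inl ⟨c, d, ?_, hne, rfl, rfl⟩
        rw [deleteEdges_adj]
        exact ⟨hcd, fun he => hxy ((hmap c d).2 he)⟩
      · exact Or.inr hp
    · rintro (⟨c, d, hcd, hne, rfl, rfl⟩ | ⟨i, him, hi⟩)
      · rw [deleteEdges_adj] at hcd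
        exact ⟨Or.inl ⟨c, d, hcd.1, hne, rfl, rfl⟩, fun he => hcd.2 ((hmap c d).1 he)⟩
      · refine ⟨Or.inr ⟨i, him, hi⟩, fun he => ?_⟩
        have hadj := h.adj_Q him
        rw [Set.mem_singleton_iff, hi] at he
        -- one of the ends of a path edge is an interior vertex, as `2 ≤ m`
        have : (0 < i ∧ i < m) ∨ (0 < i + 1 ∧ i + 1 < m) := by omega
        have hi1 := h.int i
        have hi2 := h.int (i + 1)
        rcases Sym2.eq_iff.1 he with ⟨h1, h2⟩ | ⟨h1, h2⟩ <;> rcases this with ⟨h3, h4⟩ | ⟨h3, h4⟩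
        · exact hi1 h3 h4 _ h1.symm
        · exact hi2 h3 h4 _ h2.symm
        · exact hi1 h3 h4 _ h1.symm
        · exact hi2 h3 h4 _ h2.symm

/-- Deleting an edge of the new path leaves a vertex of degree one. -/
lemma not_isTwoConnected_delete (h : Sub G u v G' φ Q m) (hm : 2 ≤ m) {i : ℕ} (hi : i < m) :
    ¬ IsTwoConnected (G'.deleteEdges {s(Q i, Q (i + 1))}) := by
  intro hc
  rw [isTwoConnected_iff_s7] at hc
  have hc' : Cl (G'.deleteEdges {s(Q i, Q (i + 1))}) ∅ Set.univᶜ ∧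
      ∀ b ∈ Set.univ, Cl (G'.deleteEdges {s(Q i, Q (i + 1))}) ∅ (Set.univᶜ ∪ {b}) := by
    simpa using hc
  have hpair : ∃ x y, (Set.univ : Set W) = {x, y} := by
    have hor : (0 < i) ∨ (i + 1 < m) := by omega
    rcases hor with h0 | h1
    · refine ⟨Q i, Q (i - 1), eq_pair_of_leaf _ _ _ _ (Set.mem_univ _) hc' ?_⟩
      intro z _ hz
      rw [deleteEdges_adj] at hz
      rcases h.adj_int h0 hi hz.1 with rfl | rfl
      · rfl
      · exact absurd rfl hz.2
    · refine ⟨Q (i + 1), Q (i + 1 + 1), eq_pair_of_leaf _ _ _ _ (Set.mem_univ _) hc' ?_⟩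
      intro z _ hz
      rw [deleteEdges_adj] at hz
      rcases h.adj_int (by omega) h1 hz.1 with rfl | rfl
      · exact absurd (by simp [Sym2.eq_swap]) hz.2
      · rfl
  obtain ⟨x, y, hxy⟩ := hpair
  have hmem : ∀ z : W, z = x ∨ z = y := by
    intro z
    have : z ∈ (Set.univ : Set W) := Set.mem_univ z
    rw [hxy] at this
    exact this
  have h01 : Q 0 ≠ Q 1 := fun he => by have := h.Qinj _ _ (by omega) (by omega) he; omega
  have h02 : Q 0 ≠ Q 2 := fun he => by have := h.Qinj _ _ (by omega) (by omega) he; omega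
  have h12 : Q 1 ≠ Q 2 := fun he => by have := h.Qinj _ _ (by omega) (by omega) he; omega
  have := hmem (Q 0)
  have := hmem (Q 1)
  have := hmem (Q 2)
  grind

/-- A `2`-connected induced subgraph of `G'` meeting the interior of the path is a single path
edge or contains the whole path. -/
lemma path_subset_or (h : Sub G u v G' φ Q m) {S' : Set W}
    (hG : Cl G' ∅ S'ᶜ ∧ ∀ b ∈ S', Cl G' ∅ (S'ᶜ ∪ {b})) {i : ℕ} (h0 : 0 < i) (him : i < m)
    (hi : Q i ∈ S') : (∃ j < m, S' = {Q j, Q (j + 1)}) ∨ ∀ j ≤ m, Q j ∈ S' := by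
  by_contra! hcon
  obtain ⟨hne, j, hj, hjS⟩ := hcon
  have hnb : ∀ k, 0 < k → k < m → Q k ∈ S' → Q (k - 1) ∈ S' ∧ Q (k + 1) ∈ S' := by
    intro k hk0 hkm hk
    constructor
    · by_contra hk1
      refine hne k hkm (eq_pair_of_leaf G' S' _ _ hk hG ?_)
      intro z hz hadj
      rcases h.adj_int hk0 hkm hadj with rfl | rfl
      · exact absurd hz hk1
      · rfl
    · by_contra hk1
      refine hne (k - 1) (by omega) ?_
      rw [Nat.sub_add_cancel hk0, Set.pair_comm]
      refine eq_pair_of_leaf G' S' _ _ hk hG ?_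
      intro z hz hadj
      rcases h.adj_int hk0 hkm hadj with rfl | rfl
      · rfl
      · exact absurd hz hk1
  have hup : ∀ d, i + d ≤ m → Q (i + d) ∈ S' := by
    intro d
    induction d with
    | zero => exact fun _ => hi
    | succ d ih =>
      intro hd
      exact (hnb (i + d) (by omega) (by omega) (ih (by omega))).2
  have hdown : ∀ d, d ≤ i → Q (i - d) ∈ S' := by
    intro d
    induction d with
    | zero => exact fun _ => hi
    | succ d ih =>
      intro hd
      exact (hnb (i - d) (by omega) (by omega) (ih (by omega))).1
  rcases Nat.le_total i j with hij | hij
  · have := hup (j - i) (by omega)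
    rw [Nat.add_sub_cancel' hij] at this
    exact hjS this
  · have := hdown (i - j) (by omega)
    rw [Nat.sub_sub_self hij] at this
    exact hjS this

/-- Contracting a set with both ends but no interior vertex of the path makes a cut vertex,
unless all old vertices are contracted. -/
lemma old_all (h : Sub G u v G' φ Q m) (hm : 2 ≤ m) {S : Set V} {S' : Set W}
    (hS : ∀ a, φ a ∈ S' ↔ a ∈ S) (hint : ∀ i, 0 < i → i < m → Q i ∉ S') (hu : u ∈ S)
    (hv : v ∈ S) (hG : ∀ b, Cl G' S' (cls S' b)) : S = Set.univ := by
  have hcls : cls S' (φ u) = S' := by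
    have huS := (hS u).2 hu
    ext x
    simp only [cls, Set.mem_ofPred_eq, huS, and_true, or_iff_right_iff_imp]
    rintro rfl
    exact huS
  have hc := hG (φ u)
  rw [hcls] at hc
  by_contra hne
  obtain ⟨a, ha⟩ := (Set.ne_univ_iff_exists_notMem S).1 hne
  have haS : φ a ∉ S' := by rwa [hS]
  have := hc.2 {x | x ∈ S' ∨ ∃ i, 0 < i ∧ i < m ∧ Q i = x} (fun x y _ hy _ => Or.inl hy)
    ⟨Q 1, hint 1 (by omega) (by omega), Or.inr ⟨1, by omega, by omega, rfl⟩⟩ (by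
      rintro x y hx hy hxy (hxS | ⟨i, h0, him, rfl⟩)
      · exact absurd hxS hx
      · have hQ : ∀ k ≤ m, Q k ∉ S' → 0 < k ∧ k < m := by
          intro k hk hkS
          refine ⟨Nat.pos_of_ne_zero ?_, lt_of_le_of_ne hk ?_⟩
          · rintro rfl
            rw [h.Q0, hS] at hkS
            exact hkS hu
          · rintro rfl
            rw [h.Qm, hS] at hkS
            exact hkS hv
        rcases h.adj_int h0 him hxy with rfl | rfl
        · have := hQ _ (by omega) hy
          exact Or.inr ⟨_, this.1, this.2, rfl⟩
        · have := hQ _ (by omega) hy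
          exact Or.inr ⟨_, this.1, this.2, rfl⟩) (φ a) haS
  rcases this with h1 | ⟨i, h0, him, hi⟩
  · exact haS h1
  · exact h.int i h0 him a hi.symm

end Sub

/-! ### Weights and cardinalities -/

section Weight

variable {G : SimpleGraph V} {u v : V} {G' : SimpleGraph W} {φ : V → W}
  {Q : ℕ → W} {m : ℕ}

/-- The weight on `G'`: old edges keep their weight, every other edge gets weight `c`. -/
noncomputable def newWeight (φ : V → W) (w : Sym2 V → ℕ) (c : ℕ) : Sym2 W → ℕ :=
  Function.extend (Sym2.map φ) w fun _ => c

namespace Sub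

lemma newWeight_map (h : Sub G u v G' φ Q m) (w : Sym2 V → ℕ) (c : ℕ) (e : Sym2 V) :
    newWeight φ w c (e.map φ) = w e :=
  (Sym2.map.injective h.inj).extend_apply _ _ _

lemma path_edge_ne (h : Sub G u v G' φ Q m) (hm : 2 ≤ m) {i : ℕ} (hi : i < m) (e : Sym2 V) :
    e.map φ ≠ s(Q i, Q (i + 1)) := by
  induction e using Sym2.ind with
  | _ a b =>
    intro he
    rw [Sym2.map_mk] at he
    have hor : 0 < i ∨ (0 < i + 1 ∧ i + 1 < m) := by omega
    have hi1 := h.int i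
    have hi2 := h.int (i + 1)
    rcases Sym2.eq_iff.1 he with ⟨h1, h2⟩ | ⟨h1, h2⟩ <;> rcases hor with h3 | ⟨h3, h4⟩
    · exact hi1 h3 hi _ h1
    · exact hi2 h3 h4 _ h2
    · exact hi1 h3 hi _ h2
    · exact hi2 h3 h4 _ h1

lemma newWeight_path (h : Sub G u v G' φ Q m) (hm : 2 ≤ m) (w : Sym2 V → ℕ) (c : ℕ) {i : ℕ}
    (hi : i < m) : newWeight φ w c s(Q i, Q (i + 1)) = c :=
  Function.extend_apply' _ _ _ fun ⟨e, he⟩ => h.path_edge_ne hm hi e he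

/-- Every edge of `G'` is an old edge or a path edge. -/
lemma edge_cases (h : Sub G u v G' φ Q m) {f : Sym2 W} (hf : f ∈ G'.edgeSet) :
    (∃ a b, G.Adj a b ∧ s(a, b) ≠ s(u, v) ∧ f = s(φ a, φ b)) ∨
      ∃ i < m, f = s(Q i, Q (i + 1)) := by
  induction f using Sym2.ind with
  | _ x y =>
    rcases (h.adj x y).1 hf with ⟨a, b, hab, hne, rfl, rfl⟩ | ⟨i, hi, he⟩
    · exact Or.inl ⟨a, b, hab, hne, rfl⟩
    · exact Or.inr ⟨i, hi, he⟩

lemma sum_old (h : Sub G u v G' φ Q m) (hm : 2 ≤ m) (w : Sym2 V → ℕ) (c : ℕ) {S : Set V}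
    {S' : Set W} (hS : ∀ a, φ a ∈ S' ↔ a ∈ S) (hint : ∀ i, 0 < i → i < m → Q i ∉ S') :
    ∑ᶠ e ∈ edgesIn G' S', newWeight φ w c e = ∑ᶠ e ∈ edgesIn G S \ {s(u, v)}, w e := by
  have hE : edgesIn G' S' = Sym2.map φ '' (edgesIn G S \ {s(u, v)}) := by
    ext f
    constructor
    · rintro ⟨hf, hfS⟩
      rcases h.edge_cases hf with ⟨a, b, hab, hne, rfl⟩ | ⟨i, hi, rfl⟩
      · refine ⟨s(a, b), ⟨⟨hab, ?_⟩, hne⟩, rfl⟩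
        simp only [Sym2.mem_iff, forall_eq_or_imp, forall_eq, hS] at hfS ⊢
        exact hfS
      · exfalso
        have hor : 0 < i ∨ (0 < i + 1 ∧ i + 1 < m) := by omega
        rcases hor with h3 | ⟨h3, h4⟩
        · exact hint i h3 hi (hfS _ (Sym2.mem_mk_left _ _))
        · exact hint _ h3 h4 (hfS _ (Sym2.mem_mk_right _ _))
    · rintro ⟨e, ⟨⟨he, heS⟩, hne⟩, rfl⟩
      induction e using Sym2.ind with
      | _ a b =>
        refine ⟨h.adj_φ he hne, ?_⟩
        simp only [Sym2.map_mk, Sym2.mem_iff, forall_eq_or_imp, forall_eq, hS] at heS ⊢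
        exact heS
  rw [hE, finsum_mem_image (Sym2.map.injective h.inj).injOn]
  exact finsum_mem_congr rfl fun e _ => h.newWeight_map w c e

lemma sum_path [Finite V] (h : Sub G u v G' φ Q m) (hm : 2 ≤ m) (w : Sym2 V → ℕ) (c : ℕ) {S : Set V}
    {S' : Set W} (hS : ∀ a, φ a ∈ S' ↔ a ∈ S) (hpath : ∀ i ≤ m, Q i ∈ S') :
    ∑ᶠ e ∈ edgesIn G' S', newWeight φ w c e =
      ∑ᶠ e ∈ edgesIn G S \ {s(u, v)}, w e + m * c := by
  have hE : edgesIn G' S' = Sym2.map φ '' (edgesIn G S \ {s(u, v)}) ∪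
      (fun i => s(Q i, Q (i + 1))) '' (Finset.range m : Set ℕ) := by
    ext f
    constructor
    · rintro ⟨hf, hfS⟩
      rcases h.edge_cases hf with ⟨a, b, hab, hne, rfl⟩ | ⟨i, hi, rfl⟩
      · refine Or.inl ⟨s(a, b), ⟨⟨hab, ?_⟩, hne⟩, rfl⟩
        simp only [Sym2.mem_iff, forall_eq_or_imp, forall_eq, hS] at hfS ⊢
        exact hfS
      · exact Or.inr ⟨i, by simpa using hi, rfl⟩
    · rintro (⟨e, ⟨⟨he, heS⟩, hne⟩, rfl⟩ | ⟨i, hi, rfl⟩)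
      · induction e using Sym2.ind with
        | _ a b =>
          refine ⟨h.adj_φ he hne, ?_⟩
          simp only [Sym2.map_mk, Sym2.mem_iff, forall_eq_or_imp, forall_eq, hS] at heS ⊢
          exact heS
      · have him : i < m := by simpa using hi
        refine ⟨h.adj_Q him, ?_⟩
        simp only [Sym2.mem_iff, forall_eq_or_imp, forall_eq]
        exact ⟨hpath i him.le, hpath (i + 1) him⟩
  have hinj : Set.InjOn (fun i => s(Q i, Q (i + 1))) (Finset.range m : Set ℕ) := by
    intro i hi j hj hij
    have hi : i < m := by simpa using hi
    have hj : j < m := by simpa using hj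
    rcases Sym2.eq_iff.1 hij with ⟨h1, -⟩ | ⟨h1, h2⟩
    · exact h.Qinj _ _ hi.le hj.le h1
    · have := h.Qinj _ _ hi.le hj h1
      have := h.Qinj _ _ hi hj.le h2
      omega
  rw [hE, finsum_mem_union ?_ (Set.toFinite _) (Set.toFinite _),
    finsum_mem_image (Sym2.map.injective h.inj).injOn, finsum_mem_image hinj,
    finsum_mem_coe_finset]
  · congr 1
    · exact finsum_mem_congr rfl fun e _ => h.newWeight_map w c e
    · rw [Finset.sum_congr rfl fun i hi => h.newWeight_path hm w c (Finset.mem_range.1 hi)]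
      simp
  · rw [Set.disjoint_left]
    rintro _ ⟨e, -, rfl⟩ ⟨i, hi, he⟩
    exact h.path_edge_ne hm (by simpa using hi) e he.symm

lemma ncard_path [Finite V] (h : Sub G u v G' φ Q m) {S : Set V}
    {S' : Set W} (hS : ∀ a, φ a ∈ S' ↔ a ∈ S) (hpath : ∀ i ≤ m, Q i ∈ S') :
    S'.ncard = S.ncard + (m - 1) := by
  have hE : S' = φ '' S ∪ Q '' (Finset.Ioo 0 m : Set ℕ) := by
    ext x
    constructor
    · intro hx
      rcases h.cover x with ⟨a, rfl⟩ | ⟨i, h0, him, rfl⟩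
      · exact Or.inl ⟨a, (hS a).1 hx, rfl⟩
      · exact Or.inr ⟨i, by simp [h0, him], rfl⟩
    · rintro (⟨a, ha, rfl⟩ | ⟨i, hi, rfl⟩)
      · exact (hS a).2 ha
      · have : 0 < i ∧ i < m := by simpa using hi
        exact hpath i this.2.le
  have hinj : Set.InjOn Q (Finset.Ioo 0 m : Set ℕ) := by
    intro i hi j hj hij
    have hi : 0 < i ∧ i < m := by simpa using hi
    have hj : 0 < j ∧ j < m := by simpa using hj
    exact h.Qinj _ _ hi.2.le hj.2.le hij
  rw [hE, Set.ncard_union_eq ?_ (Set.toFinite _) (Set.toFinite _),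
    Set.ncard_image_of_injective _ h.inj, hinj.ncard_image, Set.ncard_coe_finset]
  · simp
  · rw [Set.disjoint_left]
    rintro _ ⟨a, -, rfl⟩ ⟨i, hi, he⟩
    have hi : 0 < i ∧ i < m := by simpa using hi
    exact h.int i hi.1 hi.2 a he.symm

lemma ncard_old (h : Sub G u v G' φ Q m) {S : Set V}
    {S' : Set W} (hS : ∀ a, φ a ∈ S' ↔ a ∈ S) (hint : ∀ i, 0 < i → i < m → Q i ∉ S') :
    S'.ncard = S.ncard := by
  have hE : S' = φ '' S := by
    ext x
    constructor
    · intro hx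
      rcases h.cover x with ⟨a, rfl⟩ | ⟨i, h0, him, rfl⟩
      · exact ⟨a, (hS a).1 hx, rfl⟩
      · exact absurd hx (hint i h0 him)
    · rintro ⟨a, ha, rfl⟩
      exact (hS a).2 ha
  rw [hE, Set.ncard_image_of_injective _ h.inj]

end Sub

lemma sum_remove [Finite V] {w : Sym2 V → ℕ} {E : Set (Sym2 V)} {e : Sym2 V} (he : e ∈ E) :
    ∑ᶠ f ∈ E, w f = w e + ∑ᶠ f ∈ E \ {e}, w f := by
  conv_lhs => rw [← Set.insert_sdiff_self_of_mem he]
  exact finsum_mem_insert _ (by simp) (Set.toFinite _)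

/-- The single edge `K₂` does not satisfy `(♠)_δ`: its one edge would need weight `δ`. -/
lemma exists_third_s7 {w : Sym2 V → ℕ} {δ : ℕ} (hδ : 2 < δ) (hsp : SatisfiesSpade G δ w)
    (huv : G.Adj u v) (hw1 : w s(u, v) = 1) : ∃ z, z ≠ u ∧ z ≠ v := by
  by_contra! hcon
  have hE : G.edgeSet = {s(u, v)} := by
    ext f
    induction f using Sym2.ind with
    | _ a b =>
      rw [mem_edgeSet, Set.mem_singleton_iff]
      constructor
      · intro hab
        have := hab.ne
        have := hcon a
        have := hcon b
        rw [Sym2.eq_iff]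
        grind
      · intro he
        rwa [← mem_edgeSet, he]
  have hV : (Set.univ : Set V) = {u, v} := by
    ext z
    have := hcon z
    simp only [Set.mem_univ, Set.mem_insert_iff, Set.mem_singleton_iff, true_iff]
    grind
  have hcard : Nat.card V = 2 := by
    rw [← Set.ncard_univ, hV, Set.ncard_pair huv.ne]
  have := hsp.2.2.1
  rw [hE, finsum_mem_singleton, hw1, hcard] at this
  omega

end Weight

lemma edgesIn_univ (G : SimpleGraph V) : edgesIn G Set.univ = G.edgeSet := by
  ext; simp [edgesIn]

/-- Descent of good flats of `G'` other than path edges and the set of all old vertices. -/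
lemma Sub.isGoodFlat_of {G : SimpleGraph V} {u v : V} {G' : SimpleGraph W} {φ : V → W}
    {Q : ℕ → W} {m : ℕ} (h : Sub G u v G' φ Q m) (hm : 0 < m) (huv : G.Adj u v) {S : Set V}
    {S' : Set W} (hS : ∀ a, φ a ∈ S' ↔ a ∈ S)
    (hcase : ((∀ i, 0 < i → i < m → Q i ∉ S') ∧ ¬ (u ∈ S ∧ v ∈ S)) ∨ ∀ i ≤ m, Q i ∈ S')
    (hind : IsTwoConnected (G.induce S)) (hc' : (G'.induce S').Connected)
    (hG : IsTwoConnected (contractEdges G' (edgesIn G' S'))) : IsGoodFlat G S := by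
  refine ⟨hind, ?_⟩
  rw [isTwoConnected_contract_iff _ _ _ (reachable_edgesIn G' S' hc')] at hG
  rw [isTwoConnected_contract_iff _ _ _ (reachable_edgesIn G S hind.1)]
  exact h.contract_of hm huv hS hcase hG

end Subdivision

theorem stmt7 {δ m : ℕ} (hδ : 2 < δ) (hm : m = δ - 1)
    {V W : Type*} [Fintype V] [DecidableEq V] [Fintype W] [DecidableEq W]
    (G : SimpleGraph V) (w : Sym2 V → ℕ) (hsp : SatisfiesSpade G δ w)
    (u v : V) (huv : G.Adj u v) (hw1 : w s(u, v) = 1)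
    (G' : SimpleGraph W) (q : Fin (m + 1) → W) (hsub : IsSubdivisionAt G u v G' q) :
    ∃ w' : Sym2 W → ℕ, SatisfiesSpade G' δ w' ∧
      ∀ i : Fin m, w' s(q i.castSucc, q i.succ) = δ - 1 := by
  classical
  obtain ⟨φ, Q, h, hqQ⟩ := exists_sub hsub
  have hm2 : 2 ≤ m := by omega
  have hm0 : 0 < m := by omega
  obtain ⟨z, hzu, hzv⟩ := exists_third_s7 hδ hsp huv hw1
  obtain ⟨hG, ⟨hval, hdel, hcon⟩, htot, hflat⟩ := hsp
  have hpathw : ∀ i < m, newWeight φ w (δ - 1) s(Q i, Q (i + 1)) = δ - 1 :=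
    fun i hi => h.newWeight_path hm2 w _ hi
  have hold : ∀ a b, newWeight φ w (δ - 1) s(φ a, φ b) = w s(a, b) :=
    fun a b => h.newWeight_map w (δ - 1) s(a, b)
  -- `m (δ - 1) = 1 + δ (m - 1)`: subdividing raises the weight by `δ` for each new vertex
  have harith : ∀ A n : ℕ, 0 < n → ∀ c, 1 + A + c = δ * (n - 1) →
      A + m * (δ - 1) + c = δ * (n + (m - 1) - 1) := by
    intro A n hn c hA
    obtain ⟨k, rfl⟩ : ∃ k, δ = k + 2 := ⟨δ - 2, by omega⟩
    obtain ⟨s, rfl⟩ : ∃ s, n = s + 1 := ⟨n - 1, by omega⟩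
    have h1 : m = k + 1 := by omega
    subst h1
    have h2 : s + 1 + (k + 1 - 1) - 1 = s + k := by omega
    have h3 : k + 2 - 1 = k + 1 := by omega
    rw [h2, h3]
    rw [Nat.add_sub_cancel] at hA
    nlinarith
  refine ⟨newWeight φ w (δ - 1), ⟨h.isTwoConnected hm0 hG hzu hzv, ⟨?_, ?_, ?_⟩, ?_, ?_⟩, ?_⟩
  · intro f hf
    rcases h.edge_cases hf with ⟨a, b, hab, -, rfl⟩ | ⟨i, hi, rfl⟩
    · rw [hold]
      exact hval _ hab
    · exact Or.inr (hpathw i hi)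
  · intro f hf hf2
    rcases h.edge_cases hf with ⟨a, b, hab, hne, rfl⟩ | ⟨i, hi, rfl⟩
    · rw [hold]
      refine hdel _ hab ((h.deleteEdge hm2).isTwoConnected_of hm0 ?_ hf2)
      rw [deleteEdges_adj]
      exact ⟨huv, fun he => hne he.symm⟩
    · exact absurd hf2 (h.not_isTwoConnected_delete hm2 hi)
  · intro f hf hf2
    rcases h.edge_cases hf with ⟨a, b, hab, hne, rfl⟩ | ⟨i, hi, rfl⟩
    · rw [hold]
      refine hcon _ hab ?_
      rw [isTwoConnected_contract_iff _ _ _ (reachable_pair (h.inj.ne hab.ne))] at hf2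
      rw [isTwoConnected_contract_iff _ _ _ (reachable_pair hab.ne)]
      refine h.contract_of hm0 huv (by simp [h.inj.eq_iff]) (Or.inl ⟨?_, ?_⟩) hf2
      · rintro i h0 him (hi | hi)
        · exact h.int i h0 him _ hi.symm
        · exact h.int i h0 him _ hi.symm
      · rintro ⟨hu, hv⟩
        simp only [Set.mem_insert_iff, Set.mem_singleton_iff] at hu hv
        have := huv.ne
        rw [Ne, Sym2.eq_iff] at hne
        grind
    · exact hpathw i hi
  · have hS : ∀ a, φ a ∈ (Set.univ : Set W) ↔ a ∈ (Set.univ : Set V) := by simp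
    rw [← edgesIn_univ, h.sum_path hm2 w _ hS (by simp), ← Set.ncard_univ,
      h.ncard_path hS (by simp)]
    rw [← edgesIn_univ, sum_remove (e := s(u, v)) (by simpa [edgesIn] using huv), hw1,
      ← Set.ncard_univ] at htot
    exact harith _ _ ((Set.ncard_pos (Set.toFinite _)).2 ⟨u, Set.mem_univ u⟩) 0 htot
  · rintro S' ⟨hind, hcontr⟩
    have hS : ∀ a, φ a ∈ S' ↔ a ∈ φ ⁻¹' S' := fun a => Iff.rfl
    have hind' := (isTwoConnected_induce_iff_s7 _ _).1 hind
    by_cases hint : ∃ i, 0 < i ∧ i < m ∧ Q i ∈ S'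
    · obtain ⟨i, h0, him, hi⟩ := hint
      rcases h.path_subset_or hind' h0 him hi with ⟨j, hj, rfl⟩ | hpath
      · have hE : edgesIn G' {Q j, Q (j + 1)} = {s(Q j, Q (j + 1))} := by
          ext f
          induction f using Sym2.ind with
          | _ x y =>
            simp only [edgesIn, Set.mem_ofPred_eq, mem_edgeSet, Sym2.mem_iff, forall_eq_or_imp,
              forall_eq, Set.mem_insert_iff, Set.mem_singleton_iff]
            constructor
            · rintro ⟨hxy, hx, hy⟩
              have := hxy.ne
              rw [Sym2.eq_iff]
              grind
            · intro he
              have hadj := h.adj_Q hj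
              rcases Sym2.eq_iff.1 he with ⟨rfl, rfl⟩ | ⟨rfl, rfl⟩
              · simp [hadj]
              · simp [hadj.symm]
        rw [hE, finsum_mem_singleton, hpathw j hj, Set.ncard_pair (h.adj_Q hj).ne]
        omega
      · have hu : u ∈ φ ⁻¹' S' := by rw [← hS, ← h.Q0]; exact hpath 0 (by omega)
        have hv : v ∈ φ ⁻¹' S' := by rw [← hS, ← h.Qm]; exact hpath m le_rfl
        have hgood := hflat _ (h.isGoodFlat_of hm0 huv hS (Or.inr hpath)
          ((isTwoConnected_induce_iff_s7 _ _).2 (h.induce_of hm0 huv hS hu hv hind'))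
          hind.1 hcontr)
        rw [h.sum_path hm2 w _ hS hpath, h.ncard_path hS hpath]
        have he : s(u, v) ∈ edgesIn G (φ ⁻¹' S') := by
          refine ⟨huv, ?_⟩
          simp only [Sym2.mem_iff, forall_eq_or_imp, forall_eq]
          exact ⟨hu, hv⟩
        rw [sum_remove he, hw1] at hgood
        exact harith _ _ ((Set.ncard_pos (Set.toFinite _)).2 ⟨u, hu⟩) 1 hgood
    · push Not at hint
      rw [h.sum_old hm2 w _ hS hint, h.ncard_old hS hint]
      by_cases huvS : u ∈ φ ⁻¹' S' ∧ v ∈ φ ⁻¹' S'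
      · rw [isTwoConnected_contract_iff _ _ _ (reachable_edgesIn G' S' hind.1)] at hcontr
        rw [h.old_all hm2 hS hint huvS.1 huvS.2 hcontr.2, edgesIn_univ, Set.ncard_univ, ← htot,
          sum_remove (E := G.edgeSet) (e := s(u, v)) huv, hw1, add_comm]
      · have hgood := hflat _ (h.isGoodFlat_of hm0 huv hS (Or.inl ⟨hint, huvS⟩)
          ((isTwoConnected_induce_iff_s7 _ _).2 (h.induce_of_old hS hint hm2 hind'))
          hind.1 hcontr)
        rwa [Set.sdiff_singleton_eq_self]
        rintro ⟨-, he⟩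
        simp only [Sym2.mem_iff, forall_eq_or_imp, forall_eq] at he
        exact huvS he
  · intro i
    rw [(hqQ i).1, (hqQ i).2]
    exact hpathw i i.2

end Gor
end
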